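/- arXiv:1304.5052 — 2 statements merged into one kernel-verified Lean document; each statement's English description precedes it below -/
import Mathlib

section
/- (Borel's theorem for SL_n, as proved in the paper in characteristic zero.) Let k be an algebraically closed field of characteristic zero, let n ≥ 1, let d ≥ 2, and let w ≠ 1 be a word in the free group F_d on generators x_1,…,x_d. Then the image of the word map w : SL_n(k)^d → SL_n(k) is Zariski dense in SL_n(k): every polynomial in the n² matrix entries with coefficients in k that vanishes at every matrix of the form w(g_1,…,g_d) with g_1,…,g_d ∈ SL_n(k) vanishes at every element of SL_n(k). -/
/-!
Substituting a commutator of two new letters for each letter turns `w` into a word whose values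
on `GL_n` are values of `w` on `SL_n`. It therefore suffices to show that a polynomial vanishing at
`W`, the value of the new word at generic invertible matrices, vanishes on `SL_n`.

Some specialization of `W` is not `1`: at the matrices `1 + N_c X`, with `N_c` of rank one and
square zero, the leading coefficient in `X` is a product of matrices `± N_c`, which is nonzero when
the slopes of the `N_c` are indeterminates. In fact `W - 1` is invertible over the field of
fractions: every matrix lifts to an element of a skew polynomial ring, in whose matrix realization
the nonzero elements have nonzero determinant.

Density in `SL_n` follows by induction on `n`. The generic word of size `n - 1`, bordered by `1`, is
a specialization of `W`, so the induction hypothesis shows that a polynomial relation between the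
characteristic coefficients of `W` vanishes on the hypersurface where `1` is an eigenvalue, and is
thus divisible by its equation. That equation does not hold for `W`, so dividing by it again and
again shows that the characteristic coefficients of `W` are algebraically independent. Moreover
`W` has a cyclic vector, so it is conjugate to its companion matrix over the field of fractions.
A polynomial that vanishes at `W` vanishes at all conjugates of `W`, hence at all matrices of
determinant `1` with a cyclic vector, and these are dense in `SL_n`.
-/

open Matrix Polynomial
open scoped commutatorElement

namespace BorelDominance

/-! ### Values of words at generic matrices -/

section MatrixPolynomials

variable {k S T ι : Type*} [CommRing k] [CommRing S] [Algebra k S] [CommRing T] [Algebra k T]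

/-- Evaluation at a matrix `M` of polynomials in the matrix entries. -/
noncomputable def evalAt (M : Matrix ι ι S) : MvPolynomial (ι × ι) k →ₐ[k] S :=
  MvPolynomial.aeval fun ij => M ij.1 ij.2

lemma map_evalAt (f : S →ₐ[k] T) (M : Matrix ι ι S) (P : MvPolynomial (ι × ι) k) :
    f (evalAt M P) = evalAt (M.map f) P :=
  MvPolynomial.comp_aeval_apply _ f P

lemma evalAt_mapMatrix_mvPolynomialX [Fintype ι] [DecidableEq ι] (M : Matrix ι ι S) :
    (evalAt (k := k) M).toRingHom.mapMatrix (mvPolynomialX ι ι k) = M :=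
  mvPolynomialX_mapMatrix_aeval k M

end MatrixPolynomials

lemma map_lift {G H σ : Type*} [Group G] [Group H] (f : G →* H) (g : σ → G) (w : FreeGroup σ) :
    f (FreeGroup.lift g w) = FreeGroup.lift (fun s => f (g s)) w :=
  FreeGroup.lift_unique (f.comp (FreeGroup.lift g)) (by simp)

section GenericPoint

variable (k σ ι : Type*) [CommRing k] [Fintype ι] [DecidableEq ι]

/-- The matrix of indeterminates attached to the letter `s`. -/
noncomputable def genericMatrix (s : σ) : Matrix ι ι (MvPolynomial (σ × ι × ι) k) :=
  Matrix.of fun i j => MvPolynomial.X (s, i, j)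

variable {k σ ι} in
lemma det_genericMatrix_ne_zero [Nontrivial k] (s : σ) : (genericMatrix k σ ι s).det ≠ 0 := by
  have hinj : Function.Injective (MvPolynomial.rename (R := k) (Prod.mk s : ι × ι → σ × ι × ι)) :=
    MvPolynomial.rename_injective _ (Prod.mk_right_injective s)
  have hmap : genericMatrix k σ ι s = (MvPolynomial.rename (Prod.mk s)).mapMatrix
      (mvPolynomialX ι ι k) := by
    ext1 i j
    simp [genericMatrix]
  rw [hmap, ← AlgHom.map_det]
  exact (map_ne_zero_iff _ hinj).mpr (det_mvPolynomialX_ne_zero ι k)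

/-- The determinants to be inverted in the coordinate ring of `GL_ι ^ σ`. -/
noncomputable def genericDets : Submonoid (MvPolynomial (σ × ι × ι) k) :=
  Submonoid.closure (Set.range fun s => (genericMatrix k σ ι s).det)

/-- The coordinate ring of the variety `GL_ι ^ σ` over `k`. -/
abbrev GenericRing : Type _ := Localization (genericDets k σ ι)

variable {k σ ι}

lemma genericDets_le_nonZeroDivisors [IsDomain k] :
    genericDets k σ ι ≤ nonZeroDivisors (MvPolynomial (σ × ι × ι) k) :=
  Submonoid.closure_le.mpr <| Set.range_subset_iff.mpr fun s =>
    mem_nonZeroDivisors_of_ne_zero (det_genericMatrix_ne_zero s)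

instance [IsDomain k] : IsDomain (GenericRing k σ ι) :=
  IsLocalization.isDomain_localization genericDets_le_nonZeroDivisors

lemma isUnit_det_genericMatrix (s : σ) :
    IsUnit ((genericMatrix k σ ι s).map (algebraMap _ (GenericRing k σ ι))).det := by
  rw [← RingHom.mapMatrix_apply, ← RingHom.map_det]
  exact IsLocalization.map_units (GenericRing k σ ι)
    (⟨_, Submonoid.subset_closure ⟨s, rfl⟩⟩ : genericDets k σ ι)

variable (k ι) in
/-- The tautological point of `GL_ι ^ σ` with values in its coordinate ring. -/
noncomputable def genericPoint (s : σ) : GL ι (GenericRing k σ ι) :=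
  GeneralLinearGroup.mk'' _ (isUnit_det_genericMatrix s)

variable {S : Type*} [CommRing S] [Algebra k S]

/-- The homomorphism from the coordinate ring of `GL_ι ^ σ` corresponding to an `S`-point. -/
noncomputable def specialize (g : σ → GL ι S) : GenericRing k σ ι →ₐ[k] S :=
  IsLocalization.liftAlgHom (M := genericDets k σ ι)
    (f := MvPolynomial.aeval fun x => (g x.1).val x.2.1 x.2.2) <| by
  suffices h : genericDets k σ ι ≤ (IsUnit.submonoid S).comap
      (MvPolynomial.aeval (R := k) fun x : σ × ι × ι => (g x.1).val x.2.1 x.2.2) from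
    fun y => h y.2
  refine Submonoid.closure_le.mpr (Set.range_subset_iff.mpr fun s => ?_)
  have hmap : (MvPolynomial.aeval fun x : σ × ι × ι => (g x.1).val x.2.1 x.2.2).mapMatrix
      (genericMatrix k σ ι s) = (g s).val := by
    ext1 i j
    simp [genericMatrix]
  change IsUnit (MvPolynomial.aeval _ (genericMatrix k σ ι s).det)
  rw [AlgHom.map_det, hmap]
  exact isUnits_det_units (g s)

lemma specialize_algebraMap (g : σ → GL ι S) (P : MvPolynomial (σ × ι × ι) k) :
    specialize g (algebraMap _ (GenericRing k σ ι) P) =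
      MvPolynomial.aeval (fun x => (g x.1).val x.2.1 x.2.2) P := by
  exact IsLocalization.lift_eq _ P

lemma map_specialize_genericPoint (g : σ → GL ι S) (s : σ) :
    GeneralLinearGroup.map (specialize (k := k) g).toRingHom (genericPoint k ι s) = g s := by
  ext i j
  exact (specialize_algebraMap g (MvPolynomial.X (s, i, j))).trans (MvPolynomial.aeval_X _ _)

variable (k ι) in
/-- The value of the word `w` at the tautological point of `GL_ι ^ σ`. -/
noncomputable def genericWord (w : FreeGroup σ) : GL ι (GenericRing k σ ι) :=
  FreeGroup.lift (genericPoint k ι) w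

lemma map_specialize_genericWord (g : σ → GL ι S) (w : FreeGroup σ) :
    GeneralLinearGroup.map (specialize (k := k) g).toRingHom (genericWord k ι w) =
      FreeGroup.lift g w := by
  simp only [genericWord, map_lift, map_specialize_genericPoint]

lemma specialize_evalAt_genericWord (g : σ → GL ι S) (w : FreeGroup σ)
    (P : MvPolynomial (ι × ι) k) :
    specialize g (evalAt (genericWord k ι w).val P) = evalAt (FreeGroup.lift g w).val P := by
  rw [map_evalAt, ← map_specialize_genericWord (k := k) g w]
  rfl

lemma eq_zero_of_forall_specialize_eq_zero {k : Type*} [Field k] [Infinite k]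
    {a : GenericRing k σ ι} (ha : ∀ g : σ → GL ι k, specialize g a = 0) : a = 0 := by
  classical
  obtain ⟨P, D, rfl⟩ := IsLocalization.exists_mk'_eq (genericDets k σ ι) a
  have hP (g : σ → GL ι k) : MvPolynomial.eval (fun x => (g x.1).val x.2.1 x.2.2) P = 0 := by
    have h := congrArg (specialize g) (IsLocalization.mk'_spec (GenericRing k σ ι) P D)
    rw [map_mul, ha, zero_mul, specialize_algebraMap] at h
    exact h.symm
  set E : MvPolynomial (σ × ι × ι) k :=
    ∏ s ∈ P.vars.image Prod.fst, (genericMatrix k σ ι s).det with hE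
  have hE0 : E ≠ 0 := Finset.prod_ne_zero_iff.mpr fun s _ => det_genericMatrix_ne_zero s
  have hPE : P * E = 0 := by
    refine MvPolynomial.funext fun x => ?_
    rw [map_mul, map_zero, mul_eq_zero, or_iff_not_imp_right]
    intro hx
    let A (s : σ) : Matrix ι ι k := Matrix.of fun i j => x (s, i, j)
    have hA (s) (hs : s ∈ P.vars.image Prod.fst) : (A s).det ≠ 0 := by
      rw [hE, map_prod, ← ne_eq, Finset.prod_ne_zero_iff] at hx
      convert hx s hs
      rw [RingHom.map_det]
      congr 1
      ext1 i j
      simp [genericMatrix, A]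
    rw [← hP fun s => if h : (A s).det ≠ 0 then GeneralLinearGroup.mkOfDetNeZero (A s) h else 1]
    refine MvPolynomial.eval₂Hom_congr' rfl (fun v hv _ => ?_) rfl
    rw [dif_pos (hA v.1 (Finset.mem_image_of_mem _ hv))]
    rfl
  rw [(mul_eq_zero.mp hPE).resolve_right hE0, IsLocalization.mk'_zero]

end GenericPoint

/-! ### Nontriviality of generic words -/

section CommutatorWord

variable {σ : Type*}

/-- The substitution `x_s ↦ ⁅x_{s,0}, x_{s,1}⁆`, which turns words into words with values of
determinant one. -/
def commutatorWord : FreeGroup σ →* FreeGroup (σ × Bool) :=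
  FreeGroup.lift fun s => ⁅FreeGroup.of (s, false), FreeGroup.of (s, true)⁆

lemma lift_commutatorWord {G : Type*} [Group G] (g : σ × Bool → G) (w : FreeGroup σ) :
    FreeGroup.lift g (commutatorWord w) =
      FreeGroup.lift (fun s => ⁅g (s, false), g (s, true)⁆) w := by
  simp [commutatorWord, map_lift, map_commutatorElement]

/-- The letters of the image of a letter under `commutatorWord`. -/
def commutatorLetters (x : σ × Bool) : List ((σ × Bool) × Bool) :=
  [((x.1, !x.2), true), ((x.1, x.2), true), ((x.1, !x.2), false), ((x.1, x.2), false)]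

lemma commutatorWord_mk (L : List (σ × Bool)) :
    commutatorWord (FreeGroup.mk L) = FreeGroup.mk (L.flatMap commutatorLetters) := by
  induction L with
  | nil => rfl
  | cons x L ih =>
    rw [← List.singleton_append, ← FreeGroup.mul_mk, map_mul, ih, List.singleton_append,
      List.flatMap_cons, ← FreeGroup.mul_mk]
    congr 1
    obtain ⟨s, _ | _⟩ := x <;> rfl

lemma isChain_flatMap_commutatorLetters {L : List (σ × Bool)} (hL : FreeGroup.IsReduced L) :
    (L.flatMap commutatorLetters).IsChain fun x y => x.1 ≠ y.1 := by
  have hne : [] ∉ L.map commutatorLetters := by simp [commutatorLetters]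
  rw [List.flatMap_def, List.isChain_flatten hne]
  constructor
  · rintro l hl
    obtain ⟨⟨s, _ | _⟩, -, rfl⟩ := List.mem_map.mp hl <;> simp [commutatorLetters]
  · rw [List.isChain_map]
    refine List.IsChain.imp (fun x y h => ?_) hL
    obtain ⟨s, _ | _⟩ := x <;> obtain ⟨t, _ | _⟩ := y <;> simp_all [commutatorLetters]

end CommutatorWord

section Unipotent

variable {D ι τ : Type*} [CommRing D] [Fintype ι] [DecidableEq ι]

/-- A square-zero matrix of rank one, with kernel and image depending on the slope `a`. -/
def nilMatrix (i j : ι) (a : D) : Matrix ι ι D :=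
  vecMulVec (Pi.single i 1 + a • Pi.single j 1) (Pi.single j 1 - a • Pi.single i 1)

lemma nilMatrix_mul_self {i j : ι} (hij : i ≠ j) (a : D) :
    nilMatrix i j a * nilMatrix i j a = 0 := by
  simp [nilMatrix, vecMulVec_mul_vecMulVec, hij, hij.symm, dotProduct_add]

/-- The unit `1 + N X` of a polynomial ring, for `N` of square zero. -/
noncomputable def unipotent {Λ : Type*} [Ring Λ] (N : Λ) (hN : N * N = 0) : Λ[X]ˣ where
  val := 1 + monomial 1 N
  inv := 1 + monomial 1 (-N)
  val_inv := by simp [mul_add, add_mul, monomial_mul_monomial, hN]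
  inv_val := by simp [mul_add, add_mul, monomial_mul_monomial, hN]

lemma lift_unipotent_ne_one {Λ : Type*} [Ring Λ] {N : τ → Λ} (hN : ∀ c, N c * N c = 0)
    {L : List (τ × Bool)} (hL : L ≠ [])
    (hprod : (L.map fun x => cond x.2 (N x.1) (-N x.1)).prod ≠ 0) :
    FreeGroup.lift (fun c => unipotent (N c) (hN c)) (FreeGroup.mk L) ≠ 1 := by
  have hval : (FreeGroup.lift (fun c => unipotent (N c) (hN c)) (FreeGroup.mk L)).val =
      (L.map fun x => 1 + monomial 1 (cond x.2 (N x.1) (-N x.1))).prod := by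
    rw [FreeGroup.lift_mk, ← Units.coeHom_apply, map_list_prod, List.map_map]
    congr 2
    ext1 ⟨c, _ | _⟩ <;> rfl
  intro h
  rw [h] at hval
  have hcoeff := coeff_list_prod_of_natDegree_le
    (L.map fun x => 1 + monomial 1 (cond x.2 (N x.1) (-N x.1))) 1 <| by
      intro p hp
      obtain ⟨x, -, rfl⟩ := List.mem_map.mp hp
      exact (natDegree_add_le_of_degree_le (by simp) (natDegree_monomial_le _))
  apply hprod
  rw [← hval] at hcoeff
  simpa [coeff_one, hL, Function.comp_def] using hcoeff.symm

lemma dotProduct_prod_nilMatrix_ne_zero [IsDomain D] {i j : ι} (hij : i ≠ j) {a : τ → D}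
    (ha : Function.Injective a) {L : List (τ × Bool)} (hL : L.IsChain fun x y => x.1 ≠ y.1)
    (b : τ) (hb : ∀ x ∈ L.head?, b ≠ x.1) :
    (Pi.single j 1 - a b • Pi.single i 1 : ι → D) ⬝ᵥ ((L.map fun x =>
      cond x.2 (nilMatrix i j (a x.1)) (-nilMatrix i j (a x.1))).prod *ᵥ Pi.single j 1) ≠ 0 := by
  induction L generalizing b with
  | nil => simp [sub_dotProduct, hij]
  | cons x L ih =>
    have hφ := ih hL.tail x.1 fun y hy => hL.rel_head? hy
    have hv : (Pi.single j 1 - a b • Pi.single i 1 : ι → D) ⬝ᵥ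
        (Pi.single i 1 + a x.1 • Pi.single j 1) ≠ 0 := by
      have hbx : a x.1 - a b ≠ 0 := sub_ne_zero.mpr fun h => hb x rfl (ha h).symm
      simpa [sub_dotProduct, hij, hij.symm, neg_add_eq_sub] using hbx
    rw [List.map_cons, List.prod_cons, ← mulVec_mulVec]
    cases x.2 <;>
      simpa only [cond, nilMatrix, neg_mulVec, vecMulVec_mulVec, dotProduct_neg, dotProduct_smul,
        neg_ne_zero, op_smul_eq_smul, smul_eq_mul] using mul_ne_zero hφ hv

lemma prod_nilMatrix_ne_zero [IsDomain D] [Nontrivial τ] {i j : ι} (hij : i ≠ j) {a : τ → D}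
    (ha : Function.Injective a) {L : List (τ × Bool)} (hL : L.IsChain fun x y => x.1 ≠ y.1) :
    (L.map fun x => cond x.2 (nilMatrix i j (a x.1)) (-nilMatrix i j (a x.1))).prod ≠ 0 := by
  obtain ⟨b, hb⟩ : ∃ b : τ, ∀ x ∈ L.head?, b ≠ x.1 := by
    rcases L with _ | ⟨x, L⟩
    · exact ⟨Classical.arbitrary τ, by simp⟩
    · obtain ⟨b, hb⟩ := exists_ne x.1
      exact ⟨b, by simpa using hb⟩
  intro h
  apply dotProduct_prod_nilMatrix_ne_zero hij ha hL b hb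
  rw [h, zero_mulVec, dotProduct_zero]

end Unipotent

theorem genericWord_commutatorWord_ne_one {k σ ι : Type*} [CommRing k] [IsDomain k] [Fintype ι]
    [DecidableEq ι] [Nontrivial ι] {w : FreeGroup σ} (hw : w ≠ 1) :
    genericWord k ι (commutatorWord w) ≠ 1 := by
  classical
  obtain ⟨i, j, hij⟩ := exists_pair_ne ι
  let N (c : σ × Bool) : Matrix ι ι (MvPolynomial (σ × Bool) k) := nilMatrix i j (MvPolynomial.X c)
  have hN (c : σ × Bool) : N c * N c = 0 := nilMatrix_mul_self hij _
  let φ : (Matrix ι ι (MvPolynomial (σ × Bool) k))[X]ˣ →* GL ι (MvPolynomial (σ × Bool) k)[X] :=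
    Units.map matPolyEquiv.symm.toMulEquiv.toMonoidHom
  have hφ : Function.Injective φ := Units.map_injective matPolyEquiv.symm.injective
  obtain ⟨L, hL, rfl⟩ : ∃ L, FreeGroup.IsReduced L ∧ FreeGroup.mk L = w :=
    ⟨w.toWord, FreeGroup.isReduced_toWord, FreeGroup.mk_toWord⟩
  obtain ⟨x, hx⟩ := List.exists_mem_of_ne_nil L fun h => hw (h ▸ rfl)
  have : Nonempty σ := ⟨x.1⟩
  have hL0 : L.flatMap commutatorLetters ≠ [] :=
    List.ne_nil_of_mem (List.mem_flatMap_of_mem hx List.mem_cons_self)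
  have hne := lift_unipotent_ne_one hN hL0 <| prod_nilMatrix_ne_zero hij
    (MvPolynomial.X_injective (R := k)) (isChain_flatMap_commutatorLetters hL)
  rw [← commutatorWord_mk, ← map_ne_one_iff φ hφ, map_lift] at hne
  intro h
  rw [← map_specialize_genericWord (k := k), h, map_one] at hne
  exact hne rfl

/-! ### Invertibility of the generic word minus one -/

section ClearedWord

variable {σ ι R S : Type*} [Fintype ι] [DecidableEq ι] [CommRing R] [CommRing S]

/-- The product of the determinants of the inverted letters of a word. -/
def wordDenom (a : σ → Matrix ι ι R) (L : List (σ × Bool)) : R :=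
  (L.map fun x => cond x.2 1 (a x.1).det).prod

/-- The matrix `w - 1`, multiplied by `wordDenom`: inverses are replaced by adjugates, so that
it makes sense for singular matrices too. -/
def clearedWordSubOne (a : σ → Matrix ι ι R) (L : List (σ × Bool)) : Matrix ι ι R :=
  (L.map fun x => cond x.2 (a x.1) (a x.1).adjugate).prod - algebraMap _ _ (wordDenom a L)

lemma map_clearedWordSubOne (f : R →+* S) {a : σ → Matrix ι ι R} {g : σ → GL ι S}
    (hg : ∀ s, (g s).val = f.mapMatrix (a s)) (L : List (σ × Bool)) :
    f.mapMatrix (clearedWordSubOne a L) =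
      f (wordDenom a L) • ((FreeGroup.lift g (FreeGroup.mk L)).val - 1) := by
  have hprod : f.mapMatrix (L.map fun x => cond x.2 (a x.1) (a x.1).adjugate).prod =
      f (wordDenom a L) • (FreeGroup.lift g (FreeGroup.mk L)).val := by
    rw [wordDenom, FreeGroup.lift_mk]
    induction L with
    | nil => simp
    | cons x L ih =>
      have hx : f.mapMatrix (cond x.2 (a x.1) (a x.1).adjugate) =
          f (cond x.2 1 (a x.1).det) • (cond x.2 (g x.1) (g x.1)⁻¹).val := by
        rcases x.2
        · have hdet : f (a x.1).det • ((g x.1)⁻¹).val = (g x.1).val.adjugate := by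
            rw [RingHom.map_det, ← hg, ← one_mul (g x.1).val.adjugate, ← Units.inv_mul (g x.1),
              mul_assoc, mul_adjugate, Algebra.mul_smul_comm, mul_one]
          simpa only [cond, RingHom.map_adjugate, ← hg] using hdet.symm
        · simp [hg]
      simp only [List.map_cons, List.prod_cons, map_mul, Units.val_mul, ih, hx, smul_mul_smul_comm]
  rw [clearedWordSubOne, map_sub, hprod, smul_sub, algebraMap_eq_diagonal,
    RingHom.mapMatrix_apply, diagonal_map (map_zero f), smul_one_eq_diagonal]
  rfl

lemma map_wordDenom_ne_zero [IsDomain S] (f : R →+* S) {a : σ → Matrix ι ι R}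
    (ha : ∀ s, f (a s).det ≠ 0) (L : List (σ × Bool)) : f (wordDenom a L) ≠ 0 := by
  rw [wordDenom, map_list_prod, List.map_map]
  refine List.prod_ne_zero fun h => ?_
  obtain ⟨⟨s, _ | _⟩, -, hs⟩ := List.mem_map.mp h
  · exact ha s hs
  · exact one_ne_zero ((map_one f).symm.trans hs)

lemma det_genericWord_sub_one_ne_zero_of_det_clearedWordSubOne_ne_zero {k : Type*} [CommRing k]
    [IsDomain R] [Algebra k R] {a : σ → Matrix ι ι R} (ha : ∀ s, (a s).det ≠ 0)
    (L : List (σ × Bool)) (haL : (clearedWordSubOne a L).det ≠ 0) :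
    ((genericWord k ι (FreeGroup.mk L)).val - 1).det ≠ 0 := by
  have hf {b : R} (hb : b ≠ 0) : algebraMap R (FractionRing R) b ≠ 0 :=
    (map_ne_zero_iff _ (IsFractionRing.injective _ _)).mpr hb
  have hdet (s) : ((algebraMap R (FractionRing R)).mapMatrix (a s)).det ≠ 0 := by
    rw [← RingHom.map_det]
    exact hf (ha s)
  let g (s : σ) := GeneralLinearGroup.mkOfDetNeZero _ (hdet s)
  have hg := congrArg det (map_clearedWordSubOne _ (g := g) (fun s => rfl) L)
  rw [det_smul, ← RingHom.map_det] at hg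
  have hspec : specialize (k := k) g ((genericWord k ι (FreeGroup.mk L)).val - 1).det =
      ((FreeGroup.lift g (FreeGroup.mk L)).val - 1).det := by
    rw [AlgHom.map_det, map_sub, map_one, ← map_specialize_genericWord (k := k) g]
    rfl
  intro h
  rw [← hspec, h, map_zero, mul_zero] at hg
  exact hf haL hg

end ClearedWord

section ResidueGrading

variable (L : Type*) [CommRing L] (n : ℕ)

/-- The polynomials all of whose exponents lie in the residue class `e` modulo `n`. -/
def residueGrade (e : ZMod n) : Submodule L L[X] where
  carrier := {f | ∀ j, f.coeff j ≠ 0 → (j : ZMod n) = e}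
  zero_mem' := by simp
  add_mem' {f g} hf hg j hj := by
    by_cases hfj : f.coeff j = 0
    · exact hg j (by simpa [hfj] using hj)
    · exact hf j hfj
  smul_mem' c f hf j hj := hf j fun h => hj (by rw [coeff_smul, h, smul_zero])

instance : SetLike.GradedMonoid (residueGrade L n) where
  one_mem j hj := by
    rw [coeff_one] at hj
    simp_all
  mul_mem {e e'} f g hf hg j hj := by
    rw [coeff_mul] at hj
    obtain ⟨⟨a, b⟩, hab, hne⟩ := Finset.exists_ne_zero_of_sum_ne_zero hj
    rw [← hf a (left_ne_zero_of_mul hne), ← hg b (right_ne_zero_of_mul hne), ← Nat.cast_add,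
      Finset.HasAntidiagonal.mem_antidiagonal.mp hab]

variable {L n} {ι : Type*} [Fintype ι] [DecidableEq ι]

lemma det_mem_residueGrade {M : Matrix ι ι L[X]} (r c : ι → ZMod n)
    (hM : ∀ p q, M p q ∈ residueGrade L n (r p - c q)) :
    M.det ∈ residueGrade L n (∑ p, r p - ∑ q, c q) := by
  rw [det_apply]
  refine Submodule.sum_mem _ fun π _ => ?_
  have h := SetLike.prod_mem_graded (residueGrade L n) (fun q => r (π q) - c q) (F := Finset.univ)
    (fun q => M (π q) q) fun q _ => hM _ _
  rw [Finset.sum_sub_distrib, Equiv.sum_comp π r] at h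
  rw [Units.smul_def]
  exact zsmul_mem h _

lemma adjugate_mem_residueGrade {M : Matrix ι ι L[X]} (r : ι → ZMod n)
    (hM : ∀ p q, M p q ∈ residueGrade L n (r p - r q)) (p q : ι) :
    M.adjugate p q ∈ residueGrade L n (r p - r q) := by
  have hsum : ∑ i, Function.update r q (r p) i - ∑ i, r i = r p - r q := by
    rw [← Finset.sum_sub_distrib, Finset.sum_eq_single q] <;> simp +contextual
  rw [adjugate_apply, ← hsum]
  refine det_mem_residueGrade _ _ fun i j => ?_
  rcases eq_or_ne i q with rfl | hi
  · rw [updateRow_self, Function.update_self]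
    rcases eq_or_ne p j with rfl | hj
    · rw [Pi.single_eq_same, sub_self]
      exact SetLike.GradedOne.one_mem
    · rw [Pi.single_eq_of_ne' hj]
      exact zero_mem _
  · rw [updateRow_ne hi, Function.update_of_ne hi]
    exact hM i j

lemma coeff_det_card_mul {M : Matrix ι ι L[X]} {d : ℕ} (hM : ∀ p q, (M p q).natDegree ≤ d) :
    M.det.coeff (Fintype.card ι * d) = (M.map fun f => f.coeff d).det := by
  simp only [det_apply, finsetSum_coeff, Units.smul_def, coeff_smul, map_apply]
  refine Finset.sum_congr rfl fun π _ => ?_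
  congr 1
  exact coeff_prod_of_natDegree_le _ _ _ fun q _ => hM _ _

lemma det_ne_zero_of_support [IsDomain L] {A : Matrix ι ι L} (π : Equiv.Perm ι)
    (hA : ∀ i j, A i j ≠ 0 ↔ i = π j) : A.det ≠ 0 := by
  have hdiag : A.submatrix π id = diagonal fun i => A (π i) i := by
    ext1 i j
    rcases eq_or_ne i j with rfl | h
    · simp
    · rw [diagonal_apply_ne _ h, submatrix_apply]
      exact not_not.mp (mt (hA _ _).mp (π.injective.ne h))
  have hperm := det_permute π A
  rw [hdiag, det_diagonal] at hperm
  exact right_ne_zero_of_mul (hperm ▸ Finset.prod_ne_zero_iff.mpr fun i _ => (hA _ _).mpr rfl)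

end ResidueGrading

section CyclicAlgebra

variable (R : Type*) [CommRing R] (n : ℕ) [NeZero n]

/-- The cyclic shift of the indeterminates `x_i`, `i ∈ ℤ/n`. -/
noncomputable def shift (c : ZMod n) :
    (MvPolynomial (ZMod n) R)[X] →+* (MvPolynomial (ZMod n) R)[X] :=
  mapRingHom (MvPolynomial.rename (· + c)).toRingHom

/-- The skew polynomial ring over `R[x_i : i ∈ ℤ/n]` in a variable `u` acting on the coefficients
by the cyclic shift, realised by matrices over `R[x_i : i ∈ ℤ/n][X]`: a coefficient `a` is sent to
the diagonal matrix of its shifts, and `u` to `X` times a cyclic permutation matrix. -/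
noncomputable def skewAlgebra :
    Subring (Matrix (ZMod n) (ZMod n) (MvPolynomial (ZMod n) R)[X]) where
  carrier := {M | (∀ c, M.submatrix (Equiv.addRight c) (Equiv.addRight c) =
      (shift R n c).mapMatrix M) ∧ ∀ p q, M p q ∈ residueGrade _ n (p - q)}
  zero_mem' := by simp
  one_mem' := by
    refine ⟨fun c => by rw [submatrix_one_equiv, map_one], fun p q => ?_⟩
    rcases eq_or_ne p q with rfl | h
    · simpa using SetLike.GradedOne.one_mem (A := residueGrade (MvPolynomial (ZMod n) R) n)
    · simp [h]
  add_mem' hM hN := ⟨fun c => by rw [map_add, ← hM.1, ← hN.1]; rfl,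
    fun p q => add_mem (hM.2 p q) (hN.2 p q)⟩
  neg_mem' hM := ⟨fun c => by rw [map_neg, ← hM.1]; rfl, fun p q => neg_mem (hM.2 p q)⟩
  mul_mem' {M N} hM hN := by
    refine ⟨fun c => by rw [map_mul, ← hM.1, ← hN.1, submatrix_mul_equiv], fun p q => ?_⟩
    refine Submodule.sum_mem _ fun r _ => ?_
    have h := SetLike.GradedMul.mul_mem (hM.2 p r) (hN.2 r q)
    rwa [sub_add_sub_cancel] at h

variable {R n}

lemma adjugate_mem_skewAlgebra {M} (hM : M ∈ skewAlgebra R n) : M.adjugate ∈ skewAlgebra R n :=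
  ⟨fun c => by
    rw [RingHom.map_adjugate, ← hM.1, adjugate_submatrix_equiv_self],
    adjugate_mem_residueGrade id hM.2⟩

lemma algebraMap_det_mem_skewAlgebra {M} (hM : M ∈ skewAlgebra R n) :
    algebraMap _ (Matrix (ZMod n) (ZMod n) _) M.det ∈ skewAlgebra R n := by
  rw [Algebra.algebraMap_eq_smul_one, ← mul_adjugate]
  exact mul_mem hM (adjugate_mem_skewAlgebra hM)

lemma clearedWordSubOne_mem_skewAlgebra {σ : Type*}
    {a : σ → Matrix (ZMod n) (ZMod n) (MvPolynomial (ZMod n) R)[X]}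
    (ha : ∀ s, a s ∈ skewAlgebra R n) (L : List (σ × Bool)) :
    clearedWordSubOne a L ∈ skewAlgebra R n := by
  rw [clearedWordSubOne, wordDenom, map_list_prod, List.map_map]
  refine sub_mem (list_prod_mem fun M hM => ?_) (list_prod_mem fun M hM => ?_)
  all_goals obtain ⟨⟨s, _ | _⟩, -, rfl⟩ := List.mem_map.mp hM
  · exact adjugate_mem_skewAlgebra (ha s)
  · exact ha s
  · exact algebraMap_det_mem_skewAlgebra (ha s)
  · simp

theorem det_ne_zero_of_mem_skewAlgebra [IsDomain R] {M} (hM : M ∈ skewAlgebra R n) (hM0 : M ≠ 0) :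
    M.det ≠ 0 := by
  obtain ⟨⟨p, q⟩, -, hpq⟩ := Finset.exists_max_image Finset.univ
    (fun x : ZMod n × ZMod n => (M x.1 x.2).degree) Finset.univ_nonempty
  have hMpq : M p q ≠ 0 := by
    contrapose! hM0
    ext1 i j
    simpa [hM0] using hpq (i, j) (Finset.mem_univ _)
  set d := (M p q).natDegree
  have hd : (d : ZMod n) = p - q := hM.2 p q d (leadingCoeff_ne_zero.mpr hMpq)
  have hdeg (i j) : (M i j).natDegree ≤ d :=
    natDegree_le_natDegree (hpq (i, j) (Finset.mem_univ _))
  have hlead : (M.map fun f => f.coeff d).det ≠ 0 := by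
    refine det_ne_zero_of_support (Equiv.addRight (d : ZMod n)) fun i j =>
      ⟨fun h => by simp [hM.2 i j d h], ?_⟩
    rintro rfl
    have hshift := congrArg (coeff · d) (congrFun₂ (hM.1 (j - q)) p q)
    have hj : p + (j - q) = j + d := by rw [hd]; ring
    simp only [submatrix_apply, Equiv.coe_addRight, add_sub_cancel, hj, shift,
      RingHom.mapMatrix_apply, map_apply, coe_mapRingHom, coeff_map] at hshift
    rw [map_apply, Equiv.coe_addRight, hshift]
    exact (map_ne_zero_iff _ (MvPolynomial.rename_injective _ (add_left_injective _))).mpr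
      (leadingCoeff_ne_zero.mpr hMpq)
  intro h
  rw [← coeff_det_card_mul hdeg, h, coeff_zero] at hlead
  exact hlead rfl

/-- The evaluation `X ↦ 1`, `x_0 ↦ 1` and `x_i ↦ 0` for `i ≠ 0`. -/
noncomputable def skewEval : (MvPolynomial (ZMod n) R)[X] →+* R :=
  (MvPolynomial.eval (Pi.single 0 1)).comp (evalRingHom 1)

lemma exists_mem_skewAlgebra_map_eq (A : Matrix (ZMod n) (ZMod n) R) :
    ∃ M ∈ skewAlgebra R n, skewEval.mapMatrix M = A := by
  refine ⟨Matrix.of fun p q => monomial (p - q).val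
    (∑ c, MvPolynomial.C (A c (c - (p - q))) * MvPolynomial.X (p - c)), ⟨fun c => ?_, ?_⟩, ?_⟩
  · ext1 p q
    simp [shift, sub_add_eq_add_sub, Polynomial.map_sum]
  · intro p q j hj
    by_contra hne
    refine hj (coeff_monomial_of_ne _ fun h => hne ?_)
    rw [h, ZMod.natCast_zmod_val]
  · ext1 p q
    simp [skewEval, eval_finsetSum, Pi.single_apply, sub_eq_zero]

theorem det_genericWord_sub_one_ne_zero {k σ : Type*} [CommRing k] [IsDomain k] {w : FreeGroup σ}
    (hw : genericWord k (ZMod n) w ≠ 1) : ((genericWord k (ZMod n) w).val - 1).det ≠ 0 := by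
  obtain ⟨L, rfl⟩ : ∃ L, FreeGroup.mk L = w := Quot.exists_rep w
  choose a ha haeval using fun s : σ =>
    exists_mem_skewAlgebra_map_eq (genericPoint k (ZMod n) s).val
  have hdet (s) : skewEval (a s).det ≠ 0 := by
    rw [RingHom.map_det, haeval]
    exact (isUnits_det_units (genericPoint k (ZMod n) s)).ne_zero
  have hM0 : clearedWordSubOne a L ≠ 0 := by
    intro h
    have hL := map_clearedWordSubOne skewEval (fun s => (haeval s).symm) L
    rw [h, map_zero, eq_comm, smul_eq_zero_iff_right (map_wordDenom_ne_zero _ hdet L),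
      sub_eq_zero] at hL
    exact hw (Units.ext hL)
  have hMdet := det_ne_zero_of_mem_skewAlgebra (clearedWordSubOne_mem_skewAlgebra ha L) hM0
  exact det_genericWord_sub_one_ne_zero_of_det_clearedWordSubOne_ne_zero
    (fun s => ne_zero_of_map (hdet s)) L hMdet

end CyclicAlgebra

/-! ### Krylov and companion matrices -/

section Krylov

variable {R S : Type*} [CommRing R] [CommRing S] {n : ℕ}

lemma comp_single_one (f : R →+* S) (i : Fin n) :
    f ∘ Pi.single i 1 = Pi.single i 1 := by
  ext j
  simp [Pi.single_apply, apply_ite f]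

/-- The matrix with columns `v, M v, …, M ^ (n - 1) v`; the vector `v` is cyclic for `M` when it
is invertible. -/
def krylov (M : Matrix (Fin n) (Fin n) R) (v : Fin n → R) : Matrix (Fin n) (Fin n) R :=
  Matrix.of fun i j => (M ^ j.val *ᵥ v) i

lemma map_krylov (f : R →+* S) (M : Matrix (Fin n) (Fin n) R) (v : Fin n → R) :
    f.mapMatrix (krylov M v) = krylov (f.mapMatrix M) (f ∘ v) := by
  ext1 i j
  rw [RingHom.mapMatrix_apply, map_apply, krylov, of_apply, RingHom.map_mulVec,
    ← RingHom.mapMatrix_apply, map_pow]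
  rfl

lemma krylov_mulVec (M : Matrix (Fin n) (Fin n) R) (v a : Fin n → R) :
    krylov M v *ᵥ a = ∑ j : Fin n, a j • (M ^ j.val *ᵥ v) := by
  ext i
  simp [krylov, mulVec, dotProduct, mul_comm]

lemma mul_krylov_of_semiconjBy {U M N : Matrix (Fin n) (Fin n) R}
    (h : SemiconjBy U M N) (v : Fin n → R) : U * krylov M v = krylov N (U *ᵥ v) := by
  ext1 i j
  change (U *ᵥ (M ^ j.val *ᵥ v)) i = (N ^ j.val *ᵥ (U *ᵥ v)) i
  rw [mulVec_mulVec, mulVec_mulVec, (h.pow_right j).eq]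

lemma det_krylov_fin_two (M : Matrix (Fin 2) (Fin 2) R) (v : Fin 2 → R) :
    (krylov M v).det =
      v 0 * (M 1 0 * v 0 + M 1 1 * v 1) - (M 0 0 * v 0 + M 0 1 * v 1) * v 1 := by
  simp [krylov, det_fin_two, mulVec, dotProduct, Fin.sum_univ_two]

lemma eq_scalar_of_det_krylov_eq_zero {M : Matrix (Fin 2) (Fin 2) R}
    (h₀ : (krylov M (Pi.single 0 1)).det = 0) (h₁ : (krylov M (Pi.single 1 1)).det = 0)
    (h₀₁ : (krylov M 1).det = 0) : M = scalar (Fin 2) (M 0 0) := by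
  simp only [det_krylov_fin_two, Pi.one_apply, Pi.single_eq_same,
    Pi.single_eq_of_ne zero_ne_one, Pi.single_eq_of_ne one_ne_zero] at h₀ h₁ h₀₁
  have hM₁₀ : M 1 0 = 0 := by linear_combination h₀
  have hM₀₁ : M 0 1 = 0 := by linear_combination -h₁
  have hM₁₁ : M 1 1 = M 0 0 := by linear_combination h₀₁ - h₀ - h₁
  ext i j
  fin_cases i <;> fin_cases j <;> simp [hM₁₀, hM₀₁, hM₁₁]

/-- The companion matrix of a monic polynomial of degree `n`, of which only the coefficients of
degree less than `n` are used. -/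
def companion (n : ℕ) (p : R[X]) : Matrix (Fin n) (Fin n) R :=
  Matrix.of fun i j => if j.val + 1 = n then -p.coeff i else if i.val = j + 1 then 1 else 0

lemma map_companion (f : R →+* S) (p : R[X]) :
    f.mapMatrix (companion n p) = companion n (p.map f) := by
  ext1 i j
  simp [companion, apply_ite f]

lemma companion_mulVec_single {j : Fin n} (hj : j + 1 < n) (p : R[X]) :
    companion n p *ᵥ Pi.single j 1 = Pi.single ⟨j + 1, hj⟩ 1 := by
  ext i
  simp [companion, hj.ne, Pi.single_apply, Fin.ext_iff]

lemma companion_mulVec_single_last {j : Fin n} (hj : j + 1 = n) (p : R[X]) :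
    companion n p *ᵥ Pi.single j 1 = fun i : Fin n => -p.coeff i := by
  ext i
  simp [companion, hj]

lemma companion_pow_mulVec_single {j : ℕ} (hj : j < n + 1) (p : R[X]) :
    companion (n + 1) p ^ j *ᵥ Pi.single 0 1 = Pi.single ⟨j, hj⟩ 1 := by
  induction j with
  | zero => rw [pow_zero, one_mulVec, Fin.zero_eta]
  | succ j ih =>
    rw [pow_succ', ← mulVec_mulVec, ih (Nat.lt_of_succ_lt hj), companion_mulVec_single hj]

lemma krylov_companion (p : R[X]) :
    krylov (companion (n + 1) p) (Pi.single 0 1) = 1 := by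
  ext1 i j
  rw [krylov, of_apply, companion_pow_mulVec_single j.2, Pi.single_apply, one_apply]

lemma mul_krylov (M : Matrix (Fin n) (Fin n) R) (v : Fin n → R) :
    M * krylov M v = krylov M v * companion n M.charpoly := by
  nontriviality R
  refine ext_of_mulVec_single fun j => ?_
  rw [← mulVec_mulVec, ← mulVec_mulVec, mulVec_single_one]
  have hcol : M *ᵥ (krylov M v).col j = M ^ (j + 1 : ℕ) *ᵥ v := by
    rw [pow_succ', ← mulVec_mulVec]
    rfl
  rw [hcol]
  rcases (Nat.succ_le_of_lt j.2).lt_or_eq with hj | hj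
  · rw [companion_mulVec_single hj, mulVec_single_one]
    rfl
  · have hdeg : M.charpoly.natDegree = n := by
      rw [charpoly_natDegree_eq_dim, Fintype.card_fin]
    have hlead : M.charpoly.coeff n = 1 := by
      rw [← M.charpoly_monic.coeff_natDegree, hdeg]
    have hCH := congrArg (· *ᵥ v) (aeval_self_charpoly M)
    simp only [aeval_eq_sum_range, hdeg, Finset.sum_range_succ, hlead, one_smul, add_mulVec,
      sum_mulVec, smul_mulVec, zero_mulVec] at hCH
    rw [Finset.sum_range] at hCH
    rw [companion_mulVec_single_last hj, krylov_mulVec, ← Nat.succ_eq_add_one, hj,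
      eq_neg_of_add_eq_zero_right hCH, ← Finset.sum_neg_distrib]
    simp only [neg_smul]

lemma exists_eq_conj_companion {K : Type*} [Field K] {M : Matrix (Fin n) (Fin n) K}
    {v : Fin n → K} (hv : (krylov M v).det ≠ 0) :
    ∃ T : GL (Fin n) K, M = T.val * companion n M.charpoly * T⁻¹.val := by
  refine ⟨GeneralLinearGroup.mkOfDetNeZero _ hv, ?_⟩
  rw [Units.eq_mul_inv_iff_mul_eq]
  exact mul_krylov M v

lemma charpoly_companion {p : R[X]} (hp : p.Monic) (hdeg : p.natDegree = n + 1) :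
    (companion (n + 1) p).charpoly = p := by
  nontriviality R
  set χ := (companion (n + 1) p).charpoly
  have hχdeg : χ.natDegree = n + 1 := by rw [charpoly_natDegree_eq_dim, Fintype.card_fin]
  have hχ := mul_krylov (companion (n + 1) p) (Pi.single 0 1)
  rw [krylov_companion, mul_one, one_mul] at hχ
  ext i
  rcases lt_trichotomy i (n + 1) with hi | rfl | hi
  · have hlast := congrFun₂ hχ ⟨i, hi⟩ (Fin.last n)
    simp only [companion, of_apply, Fin.val_last, if_true, neg_inj] at hlast
    exact hlast.symm
  · rw [← hχdeg, (charpoly_monic _).coeff_natDegree, hχdeg, ← hdeg, hp.coeff_natDegree]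
  · rw [coeff_eq_zero_of_natDegree_lt (hχdeg ▸ hi), coeff_eq_zero_of_natDegree_lt (hdeg ▸ hi)]

lemma det_companion {p : R[X]} (hp : p.Monic) (hdeg : p.natDegree = n + 1) :
    (companion (n + 1) p).det = (-1) ^ (n + 1) * p.coeff 0 := by
  rw [det_eq_sign_charpoly_coeff, charpoly_companion hp hdeg, Fintype.card_fin]

end Krylov

section AddOne

variable {R S : Type*} [CommRing R] [CommRing S] {n : ℕ}

/-- The block matrix `h ⊕ 1`. -/
def addOne (n : ℕ) :
    Matrix (Fin n) (Fin n) R →* Matrix (Fin (n + 1)) (Fin (n + 1)) R where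
  toFun h := reindex finSumFinEquiv finSumFinEquiv (fromBlocks h 0 0 1)
  map_one' := by simp
  map_mul' h h' := by
    simp only [reindex_apply, submatrix_mul_equiv, fromBlocks_multiply]
    simp

lemma map_addOne (f : R →+* S) (h : Matrix (Fin n) (Fin n) R) :
    f.mapMatrix (addOne n h) = addOne n (f.mapMatrix h) := by
  simp only [addOne, RingHom.mapMatrix_apply, MonoidHom.coe_mk, OneHom.coe_mk, reindex_apply,
    ← submatrix_map, fromBlocks_map]
  simp

lemma charpoly_addOne (h : Matrix (Fin n) (Fin n) R) :
    (addOne n h).charpoly = h.charpoly * (X - C 1) := by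
  have hone : (1 : Matrix (Fin 1) (Fin 1) R).charpoly = X - C 1 := by simp [charpoly]
  rw [addOne, MonoidHom.coe_mk, OneHom.coe_mk, charpoly_reindex, charpoly_fromBlocks_zero₁₂, hone]

lemma addOne_mulVec (h : Matrix (Fin n) (Fin n) R) (u : Fin n → R) (t : Fin 1 → R) :
    addOne n h *ᵥ (Sum.elim u t ∘ finSumFinEquiv.symm) =
      Sum.elim (h *ᵥ u) t ∘ finSumFinEquiv.symm := by
  simp [addOne, submatrix_mulVec_equiv, Function.comp_assoc, fromBlocks_mulVec]

lemma det_krylov_addOne_companion (p : R[X]) :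
    (krylov (addOne (n + 1) (companion (n + 1) p))
      (Sum.elim (Pi.single 0 1) 1 ∘ finSumFinEquiv.symm)).det =
        1 + ∑ i : Fin (n + 1), p.coeff i := by
  have hblocks : krylov (addOne (n + 1) (companion (n + 1) p))
      (Sum.elim (Pi.single 0 1) 1 ∘ finSumFinEquiv.symm) =
        reindex finSumFinEquiv finSumFinEquiv (fromBlocks 1
          (Matrix.of fun i (_ : Fin 1) => -p.coeff i.val) (Matrix.of fun _ _ => 1) 1) := by
    ext1 i j
    obtain ⟨i, rfl⟩ := finSumFinEquiv.surjective i
    obtain ⟨j, rfl⟩ := finSumFinEquiv.surjective j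
    rw [krylov, of_apply, ← map_pow, addOne_mulVec, Function.comp_apply, reindex_apply,
      submatrix_apply, Equiv.symm_apply_apply, Equiv.symm_apply_apply]
    rcases i with i | i <;> rcases j with j | j
    · rw [Sum.elim_inl, finSumFinEquiv_apply_left, Fin.val_castAdd,
        companion_pow_mulVec_single j.2, Pi.single_apply, fromBlocks_apply₁₁, one_apply]
    · obtain rfl := Subsingleton.elim j 0
      rw [Sum.elim_inl, finSumFinEquiv_apply_right, Fin.val_natAdd, Fin.val_zero, add_zero,
        pow_succ', ← mulVec_mulVec, companion_pow_mulVec_single n.lt_succ_self,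
        companion_mulVec_single_last rfl, fromBlocks_apply₁₂, of_apply]
    · simp
    · simp [Subsingleton.elim i j]
  rw [hblocks, det_reindex_self, det_fromBlocks_one₁₁]
  simp [mul_apply]

end AddOne

/-! ### Characteristic coefficients -/

section CharpolyCoeffs

variable {R S : Type*} [CommRing R] [CommRing S] {m : ℕ}

/-- The coefficients of the characteristic polynomial of a matrix of size `m + 2` which are
not prescribed for matrices of determinant `1`. -/
noncomputable def charpolyCoeffs (M : Matrix (Fin (m + 2)) (Fin (m + 2)) R) (i : Fin (m + 1)) : R :=
  M.charpoly.coeff (i + 1)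

/-- The monic polynomial of degree `m + 2` with constant coefficient `(-1) ^ (m + 2)` and other
coefficients `c`. -/
noncomputable def unimodularPoly (c : Fin (m + 1) → R) : R[X] :=
  X ^ (m + 2) + (∑ i : Fin (m + 1), C (c i) * X ^ (i + 1 : ℕ) + C ((-1) ^ m))

lemma map_charpolyCoeffs (f : R →+* S) (M : Matrix (Fin (m + 2)) (Fin (m + 2)) R) :
    charpolyCoeffs (f.mapMatrix M) = f ∘ charpolyCoeffs M := by
  ext i
  simp [charpolyCoeffs, RingHom.mapMatrix_apply, charpoly_map]

lemma map_unimodularPoly (f : R →+* S) (c : Fin (m + 1) → R) :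
    (unimodularPoly c).map f = unimodularPoly (f ∘ c) := by
  simp [unimodularPoly, Polynomial.map_sum]

lemma degree_unimodularPoly_sub_lt (c : Fin (m + 1) → R) :
    (∑ i : Fin (m + 1), C (c i) * X ^ (i + 1 : ℕ) + C ((-1) ^ m)).degree < (m + 2 : ℕ) := by
  have hC : (C ((-1) ^ m) : R[X]).degree < (m + 2 : ℕ) :=
    degree_C_le.trans_lt (by exact_mod_cast (m + 1).succ_pos)
  refine (degree_add_le _ _).trans_lt (max_lt ?_ hC)
  refine (degree_sum_le _ _).trans_lt ((Finset.sup_lt_iff (WithBot.bot_lt_coe _)).mpr fun i _ => ?_)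
  exact (degree_C_mul_X_pow_le _ _).trans_lt (by exact_mod_cast Nat.succ_lt_succ i.2)

lemma unimodularPoly_monic (c : Fin (m + 1) → R) : (unimodularPoly c).Monic :=
  monic_X_pow_add (degree_unimodularPoly_sub_lt c)

lemma natDegree_unimodularPoly [Nontrivial R] (c : Fin (m + 1) → R) :
    (unimodularPoly c).natDegree = m + 2 := by
  refine natDegree_eq_of_degree_eq_some ?_
  have hlt := degree_unimodularPoly_sub_lt c
  rw [← degree_X_pow (R := R)] at hlt
  rw [unimodularPoly, degree_add_eq_left_of_degree_lt hlt, degree_X_pow]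

lemma unimodularPoly_coeff_zero (c : Fin (m + 1) → R) :
    (unimodularPoly c).coeff 0 = (-1) ^ m := by
  simp [unimodularPoly, coeff_X_pow, -map_pow]

lemma unimodularPoly_coeff_succ (c : Fin (m + 1) → R) (i : Fin (m + 1)) :
    (unimodularPoly c).coeff (i + 1) = c i := by
  simp [unimodularPoly, coeff_X_pow, Fin.val_inj, i.2.ne, -map_pow]

lemma charpolyCoeffs_eq_of_charpoly_eq {M : Matrix (Fin (m + 2)) (Fin (m + 2)) R}
    {c : Fin (m + 1) → R} (h : M.charpoly = unimodularPoly c) : charpolyCoeffs M = c := by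
  ext i
  rw [charpolyCoeffs, h, unimodularPoly_coeff_succ]

lemma charpoly_eq_unimodularPoly {M : Matrix (Fin (m + 2)) (Fin (m + 2)) R} (hM : M.det = 1) :
    M.charpoly = unimodularPoly (charpolyCoeffs M) := by
  nontriviality R
  have hcoeff : M.charpoly.coeff 0 = (-1) ^ m := by
    have hdet := det_eq_sign_charpoly_coeff M
    rw [hM, Fintype.card_fin, pow_add, neg_one_sq, mul_one] at hdet
    have hsq : ((-1) ^ m * (-1) ^ m : R) = 1 := by simp [← mul_pow]
    linear_combination (-(-1) ^ m) * hdet - M.charpoly.coeff 0 * hsq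
  have hsum := M.charpoly_monic.as_sum
  rw [charpoly_natDegree_eq_dim, Fintype.card_fin, Finset.sum_range_succ', Finset.sum_range,
    hcoeff, pow_zero, mul_one] at hsum
  exact hsum

lemma eval_one_unimodularPoly (c : Fin (m + 1) → R) :
    (unimodularPoly c).eval 1 = 1 + (∑ i, c i + (-1) ^ m) := by
  simp [unimodularPoly, eval_finsetSum]

lemma det_companion_unimodularPoly (c : Fin (m + 1) → R) :
    (companion (m + 2) (unimodularPoly c)).det = 1 := by
  nontriviality R
  rw [det_companion (unimodularPoly_monic c) (natDegree_unimodularPoly c),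
    unimodularPoly_coeff_zero, ← pow_add, Even.neg_one_pow ⟨m + 1, by ring⟩]

end CharpolyCoeffs

section Divisibility

lemma X_sub_rename_dvd {k : Type*} [CommRing k] [IsDomain k] [Infinite k] {m : ℕ}
    {F : MvPolynomial (Fin (m + 1)) k} {h : MvPolynomial (Fin m) k}
    (hF : ∀ x : Fin m → k, MvPolynomial.eval (Fin.cons (MvPolynomial.eval x h) x) F = 0) :
    MvPolynomial.X 0 - MvPolynomial.rename Fin.succ h ∣ F := by
  have hroot : (MvPolynomial.finSuccEquiv k m F).IsRoot h := by
    refine MvPolynomial.funext fun x => ?_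
    rw [map_zero, ← hF x, MvPolynomial.eval_eq_eval_mv_eval', eval_map_apply]
  have hrename : (MvPolynomial.finSuccEquiv k m).toAlgHom.comp (MvPolynomial.rename Fin.succ) =
      Algebra.algHom k _ _ := by
    refine MvPolynomial.algHom_ext fun i => ?_
    rw [AlgHom.comp_apply, MvPolynomial.rename_X]
    exact MvPolynomial.finSuccEquiv_X_succ
  have hh : MvPolynomial.finSuccEquiv k m (MvPolynomial.rename Fin.succ h) = C h :=
    DFunLike.congr_fun hrename h
  rw [← map_dvd_iff (MvPolynomial.finSuccEquiv k m), map_sub, MvPolynomial.finSuccEquiv_X_zero, hh]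
  exact dvd_iff_isRoot.mpr hroot

lemma injective_of_dvd_of_map_eq_zero {A B : Type*} [CommRing A] [IsDomain A] [WfDvdMonoid A]
    [CommRing B] [IsDomain B] (f : A →+* B) {H : A} (hH : f H ≠ 0) (hunit : ¬ IsUnit H)
    (hdvd : ∀ F, f F = 0 → H ∣ F) : Function.Injective f := by
  rw [injective_iff_map_eq_zero]
  intro F hF
  by_contra hF0
  obtain ⟨F', hF', hnd⟩ :=
    (FiniteMultiplicity.of_not_isUnit hunit hF0).exists_eq_pow_mul_and_not_dvd
  refine hnd (hdvd F' ?_)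
  rw [hF', map_mul, map_pow] at hF
  exact (mul_eq_zero.mp hF).resolve_left (pow_ne_zero _ hH)

end Divisibility

/-! ### Algebraic independence of the characteristic coefficients -/

section Dominance

lemma exists_det_eq_one_charpolyCoeffs_addOne {R : Type*} [CommRing R] {m : ℕ}
    {c : Fin (m + 1) → R} (hc : (unimodularPoly c).IsRoot 1) :
    ∃ A : Matrix (Fin (m + 1)) (Fin (m + 1)) R,
      A.det = 1 ∧ charpolyCoeffs (addOne (m + 1) A) = c := by
  nontriviality R
  obtain ⟨q, hq⟩ := dvd_iff_isRoot.mpr hc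
  have hmonic : q.Monic := (monic_X_sub_C 1).of_mul_monic_left (hq ▸ unimodularPoly_monic c)
  have hdeg : q.natDegree = m + 1 := by
    have h := natDegree_unimodularPoly c
    rw [hq, (monic_X_sub_C 1).natDegree_mul hmonic, natDegree_X_sub_C] at h
    lia
  have hcoeff : (-1) ^ (m + 1) * q.coeff 0 = 1 := by
    have h := unimodularPoly_coeff_zero c
    rw [hq, mul_coeff_zero, coeff_sub, coeff_X_zero, coeff_C_zero] at h
    rw [pow_succ, mul_assoc, ← zero_sub, h, ← mul_pow]
    simp
  refine ⟨companion (m + 1) q, by rw [det_companion hmonic hdeg, hcoeff], ?_⟩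
  apply charpolyCoeffs_eq_of_charpoly_eq
  rw [charpoly_addOne, charpoly_companion hmonic hdeg, hq, mul_comm]

variable {k σ : Type*} [CommRing k] {m : ℕ} {w : FreeGroup σ}

variable (k) in
/-- The Zariski closure of the values of `w` on `GL_n ^ σ`, computed at the generic point,
contains `SL_n(k)`. -/
def IsDenseInSL (w : FreeGroup σ) (n : ℕ) : Prop :=
  ∀ P : MvPolynomial (Fin n × Fin n) k, evalAt (genericWord k (Fin n) w).val P = 0 →
    ∀ A : Matrix (Fin n) (Fin n) k, A.det = 1 → evalAt A P = 0

lemma map_aeval_charpolyCoeffs {S T : Type*} [CommRing S] [Algebra k S] [CommRing T] [Algebra k T]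
    (f : S →ₐ[k] T) (M : Matrix (Fin (m + 2)) (Fin (m + 2)) S) (F : MvPolynomial (Fin (m + 1)) k) :
    f (MvPolynomial.aeval (charpolyCoeffs M) F) =
      MvPolynomial.aeval (charpolyCoeffs (f.toRingHom.mapMatrix M)) F := by
  rw [MvPolynomial.comp_aeval_apply, map_charpolyCoeffs]
  rfl

lemma evalAt_aeval_charpolyCoeffs_addOne {S : Type*} [CommRing S] [Algebra k S]
    (M : Matrix (Fin (m + 1)) (Fin (m + 1)) S) (F : MvPolynomial (Fin (m + 1)) k) :
    evalAt M (MvPolynomial.aeval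
      (charpolyCoeffs (addOne (m + 1) (mvPolynomialX (Fin (m + 1)) (Fin (m + 1)) k))) F) =
        MvPolynomial.aeval (charpolyCoeffs (addOne (m + 1) M)) F := by
  rw [map_aeval_charpolyCoeffs, map_addOne, evalAt_mapMatrix_mvPolynomialX]

lemma exists_lift_eq_addOne_genericWord {n : ℕ} (w : FreeGroup σ) :
    ∃ g : σ → GL (Fin (n + 1)) (GenericRing k σ (Fin n)),
      (FreeGroup.lift g w).val = addOne n (genericWord k (Fin n) w).val :=
  ⟨fun s => Units.map (addOne n) (genericPoint k (Fin n) s),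
    congrArg Units.val (map_lift (Units.map (addOne n)) (genericPoint k (Fin n)) w).symm⟩

lemma aeval_charpolyCoeffs_genericWord_addOne {F : MvPolynomial (Fin (m + 1)) k}
    (hF : MvPolynomial.aeval (charpolyCoeffs (genericWord k (Fin (m + 2)) w).val) F = 0) :
    MvPolynomial.aeval
      (charpolyCoeffs (addOne (m + 1) (genericWord k (Fin (m + 1)) w).val)) F = 0 := by
  obtain ⟨g, hg⟩ := exists_lift_eq_addOne_genericWord (k := k) (n := m + 1) w
  rw [← hg, ← map_specialize_genericWord (k := k) g w, ← map_zero (specialize (k := k) g), ← hF,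
    map_aeval_charpolyCoeffs]
  rfl

lemma IsDenseInSL.eval_eq_zero (h : IsDenseInSL k w (m + 1)) {F : MvPolynomial (Fin (m + 1)) k}
    (hF : MvPolynomial.aeval (charpolyCoeffs (genericWord k (Fin (m + 2)) w).val) F = 0)
    {c : Fin (m + 1) → k} (hc : (unimodularPoly c).IsRoot 1) : MvPolynomial.eval c F = 0 := by
  obtain ⟨A, hA, rfl⟩ := exists_det_eq_one_charpolyCoeffs_addOne hc
  have hP := h _ ((evalAt_aeval_charpolyCoeffs_addOne _ F).trans
    (aeval_charpolyCoeffs_genericWord_addOne hF)) A hA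
  rwa [evalAt_aeval_charpolyCoeffs_addOne] at hP

lemma aeval_eval_one_unimodularPoly {S : Type*} [CommRing S] [Algebra k S] (c : Fin (m + 1) → S) :
    MvPolynomial.aeval c (eval 1 (unimodularPoly (MvPolynomial.X (R := k)))) =
      (unimodularPoly c).eval 1 := by
  simp [eval_one_unimodularPoly]

lemma not_isUnit_eval_one_unimodularPoly [Nontrivial k] :
    ¬ IsUnit (eval 1 (unimodularPoly (m := m) (MvPolynomial.X (R := k)))) := by
  intro hunit
  have h := hunit.map (MvPolynomial.aeval (Fin.cons (-(1 + (-1) ^ m)) (0 : Fin m → k)))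
  rw [aeval_eval_one_unimodularPoly, eval_one_unimodularPoly] at h
  simp [Fin.sum_univ_succ] at h

lemma eval_one_unimodularPoly_dvd [IsDomain k] [Infinite k] {F : MvPolynomial (Fin (m + 1)) k}
    (hF : ∀ c : Fin (m + 1) → k, (unimodularPoly c).IsRoot 1 → MvPolynomial.eval c F = 0) :
    eval 1 (unimodularPoly MvPolynomial.X) ∣ F := by
  let t : MvPolynomial (Fin m) k := -(1 + (∑ i, MvPolynomial.X i + (-1) ^ m))
  have ht : MvPolynomial.X 0 - MvPolynomial.rename Fin.succ t =
      eval 1 (unimodularPoly MvPolynomial.X) := by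
    simp only [t, eval_one_unimodularPoly, Fin.sum_univ_succ, map_neg, map_add, map_one, map_sum,
      MvPolynomial.rename_X, map_pow]
    ring
  rw [← ht]
  refine X_sub_rename_dvd fun x => hF _ ?_
  simp only [t, IsRoot, eval_one_unimodularPoly, Fin.sum_univ_succ, Fin.cons_zero, Fin.cons_succ,
    map_neg, map_add, map_one, map_sum, MvPolynomial.eval_X, map_pow]
  ring

theorem IsDenseInSL.algebraicIndependent {k : Type*} [Field k] [Infinite k]
    (h : IsDenseInSL k w (m + 1))
    (hdet : (genericWord k (Fin (m + 2)) w).val.det = 1)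
    (hdet_sub : ((genericWord k (Fin (m + 2)) w).val - 1).det ≠ 0) :
    AlgebraicIndependent k (charpolyCoeffs (genericWord k (Fin (m + 2)) w).val) := by
  -- The generic word does not lie on the hypersurface where `1` is an eigenvalue.
  have hone : MvPolynomial.aeval (charpolyCoeffs (genericWord k (Fin (m + 2)) w).val)
      (eval 1 (unimodularPoly (MvPolynomial.X (R := k)))) ≠ 0 := by
    rw [aeval_eval_one_unimodularPoly, ← charpoly_eq_unimodularPoly hdet, eval_charpoly, map_one,
      ← neg_sub, det_neg]
    exact mul_ne_zero (pow_ne_zero _ (neg_ne_zero.mpr one_ne_zero)) hdet_sub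
  exact injective_of_dvd_of_map_eq_zero (MvPolynomial.aeval _).toRingHom hone
    not_isUnit_eval_one_unimodularPoly fun F hF =>
      eval_one_unimodularPoly_dvd fun c => h.eval_eq_zero hF

end Dominance

/-! ### Cyclic vectors of the generic word -/

section Cyclic

variable {k σ S : Type*} [CommRing k] [CommRing S] [Algebra k S] {n : ℕ} {w : FreeGroup σ}

lemma det_krylov_lift_mulVec_eq_zero
    (hW : (krylov (genericWord k (Fin (n + 1)) w).val (Pi.single 0 1)).det = 0)
    (g : σ → GL (Fin (n + 1)) S) (U : GL (Fin (n + 1)) S) :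
    (krylov (FreeGroup.lift g w).val (U.val *ᵥ Pi.single 0 1)).det = 0 := by
  let g' (s : σ) := U⁻¹ * g s * U
  have hg' : FreeGroup.lift g' w = U⁻¹ * FreeGroup.lift g w * U := by
    simpa [g'] using (map_lift (MulAut.conj U⁻¹).toMonoidHom g w).symm
  have hsemi : SemiconjBy U.val (FreeGroup.lift g' w).val (FreeGroup.lift g w).val := by
    exact congrArg Units.val (by rw [hg']; group : U * FreeGroup.lift g' w = FreeGroup.lift g w * U)
  have h := congrArg (specialize (k := k) g').toRingHom hW
  rw [RingHom.map_det, map_krylov, comp_single_one, map_zero] at h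
  rw [← mul_krylov_of_semiconjBy hsemi, det_mul, ← map_specialize_genericWord (k := k) g']
  exact mul_eq_zero_of_right _ h

lemma sumElim_single_one_eq_transvection_mulVec :
    Sum.elim (Pi.single 0 1) 1 ∘ finSumFinEquiv.symm =
      transvection (Fin.last (n + 1)) 0 (1 : S) *ᵥ Pi.single 0 1 := by
  ext i
  obtain ⟨i, rfl⟩ := finSumFinEquiv.surjective i
  rw [transvection, add_mulVec, one_mulVec, Function.comp_apply, Equiv.symm_apply_apply]
  rcases i with i | i
  · have hlast : Fin.last (n + 1) ≠ Fin.castAdd 1 i := (Fin.castSucc_lt_last i).ne'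
    have hzero : Fin.castAdd 1 i = 0 ↔ i = 0 := Fin.castSucc_eq_zero_iff
    rw [finSumFinEquiv_apply_left, Pi.add_apply, mulVec_single_one, col_apply,
      single_apply_of_row_ne hlast, add_zero, Sum.elim_inl, Pi.single_apply, Pi.single_apply]
    simp only [hzero]
  · simp [Matrix.single, Fin.ext_iff]

end Cyclic

section CyclicGenericWord

variable {k σ : Type*} [CommRing k] {n : ℕ} {w : FreeGroup σ}

lemma evalAt_det_krylov_addOne {S : Type*} [CommRing S] [Algebra k S]
    (M : Matrix (Fin (n + 1)) (Fin (n + 1)) S) :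
    evalAt M (krylov (addOne (n + 1) (mvPolynomialX (Fin (n + 1)) (Fin (n + 1)) k))
      (Sum.elim (Pi.single 0 1) 1 ∘ finSumFinEquiv.symm)).det =
      (krylov (addOne (n + 1) M) (Sum.elim (Pi.single 0 1) 1 ∘ finSumFinEquiv.symm)).det := by
  have hcomp : (evalAt (k := k) M).toRingHom ∘
      (Sum.elim (Pi.single 0 1) 1 : Fin (n + 1) ⊕ Fin 1 → _) ∘ finSumFinEquiv.symm =
        Sum.elim (Pi.single 0 1) 1 ∘ finSumFinEquiv.symm := by
    rw [← Function.comp_assoc, Sum.comp_elim, comp_single_one, Pi.comp_one, map_one]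
    rfl
  have hdet := (evalAt (k := k) M).toRingHom.map_det (krylov
    (addOne (n + 1) (mvPolynomialX (Fin (n + 1)) (Fin (n + 1)) k))
      (Sum.elim (Pi.single 0 1) 1 ∘ finSumFinEquiv.symm))
  rwa [map_krylov, map_addOne, evalAt_mapMatrix_mvPolynomialX, hcomp] at hdet

lemma IsDenseInSL.det_krylov_genericWord_ne_zero [Nontrivial k] (h : IsDenseInSL k w (n + 2)) :
    (krylov (genericWord k (Fin (n + 3)) w).val (Pi.single 0 1)).det ≠ 0 := by
  intro hW
  obtain ⟨g, hg⟩ := exists_lift_eq_addOne_genericWord (k := k) (n := n + 2) w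
  let U : GL (Fin (n + 3)) (GenericRing k σ (Fin (n + 2))) :=
    GeneralLinearGroup.mk'' (transvection (Fin.last (n + 2)) 0 1) (by simp)
  have hzero := det_krylov_lift_mulVec_eq_zero hW g U
  rw [hg, GeneralLinearGroup.val_mk'', ← sumElim_single_one_eq_transvection_mulVec] at hzero
  let c : Fin (n + 1) → k := Pi.single 0 (-(-1) ^ n)
  have hA := h _ ((evalAt_det_krylov_addOne _).trans hzero) _ (det_companion_unimodularPoly c)
  rw [evalAt_det_krylov_addOne, det_krylov_addOne_companion, Fin.sum_univ_succ] at hA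
  simp [unimodularPoly_coeff_zero, unimodularPoly_coeff_succ, c] at hA

lemma map_specialize_one_genericWord {ι : Type*} [Fintype ι] [DecidableEq ι] (w : FreeGroup σ) :
    (specialize (1 : σ → GL ι k)).toRingHom.mapMatrix (genericWord k ι w).val = 1 := by
  have hone : FreeGroup.lift (1 : σ → GL ι k) w = 1 :=
    (map_lift (1 : GL ι k →* GL ι k) 1 w).symm
  exact congrArg Units.val ((map_specialize_genericWord (k := k) 1 w).trans hone)

/-- A scalar generic word is `1` or `-1`, and it specializes to `1`. -/
lemma genericWord_eq_one_of_eq_scalar [IsDomain k] {c : GenericRing k σ (Fin 2)}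
    (hc : (genericWord k (Fin 2) w).val = scalar (Fin 2) c)
    (hdet : (genericWord k (Fin 2) w).val.det = 1) : genericWord k (Fin 2) w = 1 := by
  have hspec : specialize (1 : σ → GL (Fin 2) k) c = 1 := by
    have h := map_specialize_one_genericWord (k := k) (ι := Fin 2) w
    rw [hc] at h
    simpa using congrFun₂ h 0 0
  have hone : c = 1 := by
    rw [hc, scalar_apply, det_diagonal, Fin.prod_univ_two] at hdet
    rcases mul_self_eq_one_iff.mp hdet with h | h
    · exact h
    · rw [h, map_neg, map_one] at hspec
      rw [h, ← map_one (algebraMap k _), ← map_neg, hspec]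
  ext1
  simpa [hone] using hc

lemma det_krylov_genericWord_two_ne_zero [IsDomain k]
    (hdet : (genericWord k (Fin 2) w).val.det = 1) (hne : genericWord k (Fin 2) w ≠ 1) :
    (krylov (genericWord k (Fin 2) w).val (Pi.single 0 1)).det ≠ 0 := by
  intro hW
  let U : GL (Fin 2) (GenericRing k σ (Fin 2)) :=
    GeneralLinearGroup.mk'' (transvection 1 0 1) (by simp)
  let V : GL (Fin 2) (GenericRing k σ (Fin 2)) := GeneralLinearGroup.swap _ 0 1
  have hV : V.val *ᵥ Pi.single 0 1 = Pi.single 1 1 := by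
    rw [GeneralLinearGroup.val_swap, swap_mulVec]
    ext i
    fin_cases i <;> simp
  have hU : U.val *ᵥ Pi.single 0 1 = 1 := by
    ext i
    fin_cases i <;> simp [U, transvection]
  refine hne (genericWord_eq_one_of_eq_scalar (eq_scalar_of_det_krylov_eq_zero hW ?_ ?_) hdet)
  · rw [← hV]
    exact det_krylov_lift_mulVec_eq_zero hW (genericPoint k _) V
  · rw [← hU]
    exact det_krylov_lift_mulVec_eq_zero hW (genericPoint k _) U

end CyclicGenericWord

/-! ### Density -/

section Normalize

variable {R S : Type*} [CommRing R] [CommRing S] {n : ℕ}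

/-- The matrix of determinant `1` obtained by rescaling the first column of an invertible one. -/
def normalize (G : GL (Fin (n + 1)) R) : Matrix (Fin (n + 1)) (Fin (n + 1)) R :=
  G.val * diagonal (Pi.mulSingle 0 (GeneralLinearGroup.det G)⁻¹.val)

lemma det_normalize (G : GL (Fin (n + 1)) R) : (normalize G).det = 1 := by
  rw [normalize, det_mul, det_diagonal, Finset.prod_pi_mulSingle', if_pos (Finset.mem_univ _),
    ← GeneralLinearGroup.val_det_apply, Units.mul_inv]

lemma normalize_of_det_eq_one {G : GL (Fin (n + 1)) R} (hG : G.val.det = 1) :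
    normalize G = G.val := by
  have hdet : GeneralLinearGroup.det G = 1 := Units.ext hG
  simp [normalize, hdet]

lemma map_normalize (f : R →+* S) (G : GL (Fin (n + 1)) R) :
    f.mapMatrix (normalize G) = normalize (GeneralLinearGroup.map f G) := by
  have hdiag : f.mapMatrix (diagonal (Pi.mulSingle 0 (GeneralLinearGroup.det G)⁻¹.val)) =
      diagonal (Pi.mulSingle (0 : Fin (n + 1))
        (GeneralLinearGroup.det (GeneralLinearGroup.map f G))⁻¹.val) := by
    rw [RingHom.mapMatrix_apply, diagonal_map (map_zero f), GeneralLinearGroup.map_det]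
    congr 1
    ext i
    exact Pi.apply_mulSingle (fun _ => f) (fun _ => map_one f) 0 _ i
  rw [normalize, map_mul, hdiag]
  rfl

end Normalize

section Conjugacy

variable {k σ S ι : Type*} [CommRing k] [CommRing S] [Algebra k S] [Fintype ι] [DecidableEq ι]
  {w : FreeGroup σ}

lemma evalAt_conj_lift_eq_zero {P : MvPolynomial (ι × ι) k}
    (hP : evalAt (genericWord k ι w).val P = 0) (g : σ → GL ι S) (U : GL ι S) :
    evalAt (U.val * (FreeGroup.lift g w).val * U⁻¹.val) P = 0 := by
  have hconj : U * FreeGroup.lift g w * U⁻¹ = FreeGroup.lift (fun s => U * g s * U⁻¹) w :=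
    map_lift (MulAut.conj U).toMonoidHom g w
  rw [← Units.val_mul, ← Units.val_mul, hconj, ← specialize_evalAt_genericWord, hP, map_zero]

end Conjugacy

section ConjCompanion

variable {k S T : Type*} [CommRing k] [CommRing S] [Algebra k S] [CommRing T] [Algebra k T] {m : ℕ}

/-- The conjugate by `Q` of the companion matrix with determinant `1` and characteristic
coefficients `c`. -/
noncomputable def conjCompanion (Q : GL (Fin (m + 2)) k) (c : Fin (m + 1) → S) :
    Matrix (Fin (m + 2)) (Fin (m + 2)) S :=
  (GeneralLinearGroup.map (algebraMap k S) Q).val * companion (m + 2) (unimodularPoly c) *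
    (GeneralLinearGroup.map (algebraMap k S) Q)⁻¹.val

lemma map_conjCompanion (f : S →ₐ[k] T) (Q : GL (Fin (m + 2)) k) (c : Fin (m + 1) → S) :
    f.toRingHom.mapMatrix (conjCompanion Q c) = conjCompanion Q (f ∘ c) := by
  have hQ (Q : GL (Fin (m + 2)) k) :
      f.toRingHom.mapMatrix (GeneralLinearGroup.map (algebraMap k S) Q).val =
        (GeneralLinearGroup.map (algebraMap k T) Q).val := by
    ext i j
    exact f.commutes _
  rw [conjCompanion, map_mul, map_mul, map_companion, map_unimodularPoly, ← map_inv, hQ, hQ]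
  rfl

lemma aeval_evalAt_conjCompanion (Q : GL (Fin (m + 2)) k) (c : Fin (m + 1) → S)
    (P : MvPolynomial (Fin (m + 2) × Fin (m + 2)) k) :
    MvPolynomial.aeval c (evalAt (conjCompanion Q (MvPolynomial.X (R := k))) P) =
      evalAt (conjCompanion Q c) P := by
  have hX : MvPolynomial.aeval (R := k) c ∘ MvPolynomial.X = c :=
    funext (MvPolynomial.aeval_X c)
  have hmap := map_conjCompanion (MvPolynomial.aeval (R := k) c) Q MvPolynomial.X
  rw [hX] at hmap
  rw [map_evalAt, ← hmap]
  rfl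

end ConjCompanion

section Companion

variable {k σ : Type*} [CommRing k] {m : ℕ} {w : FreeGroup σ}
  {P : MvPolynomial (Fin (m + 2) × Fin (m + 2)) k}

lemma exists_conjCompanion_eq_conj {K : Type*} [Field K] [Algebra k K] (Q : GL (Fin (m + 2)) k)
    {M : Matrix (Fin (m + 2)) (Fin (m + 2)) K} {v : Fin (m + 2) → K} (hM : M.det = 1)
    (hv : (krylov M v).det ≠ 0) :
    ∃ U : GL (Fin (m + 2)) K, conjCompanion Q (charpolyCoeffs M) = U.val * M * U⁻¹.val := by
  obtain ⟨T, hT⟩ := exists_eq_conj_companion hv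
  refine ⟨GeneralLinearGroup.map (algebraMap k K) Q * T⁻¹, ?_⟩
  have hcompanion : T⁻¹.val * M * T.val = companion (m + 2) M.charpoly := by
    rw [mul_assoc, Units.inv_mul_eq_iff_eq_mul, ← Units.eq_mul_inv_iff_mul_eq]
    exact hT
  rw [conjCompanion, ← charpoly_eq_unimodularPoly hM, ← hcompanion, _root_.mul_inv_rev, inv_inv]
  simp only [Units.val_mul, mul_assoc]

lemma evalAt_conjCompanion_charpolyCoeffs_eq_zero [IsDomain k]
    (hdet : (genericWord k (Fin (m + 2)) w).val.det = 1)
    (hv : (krylov (genericWord k (Fin (m + 2)) w).val (Pi.single 0 1)).det ≠ 0)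
    (hP : evalAt (genericWord k (Fin (m + 2)) w).val P = 0) (Q : GL (Fin (m + 2)) k) :
    evalAt (conjCompanion Q (charpolyCoeffs (genericWord k (Fin (m + 2)) w).val)) P = 0 := by
  let K := FractionRing (GenericRing k σ (Fin (m + 2)))
  let φ : GenericRing k σ (Fin (m + 2)) →ₐ[k] K := Algebra.algHom k _ K
  have hφ : Function.Injective φ := IsFractionRing.injective _ K
  let g (s : σ) : GL (Fin (m + 2)) K := GeneralLinearGroup.map φ.toRingHom (genericPoint k _ s)
  have hg : φ.toRingHom.mapMatrix (genericWord k (Fin (m + 2)) w).val =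
      (FreeGroup.lift g w).val :=
    congrArg Units.val (map_lift (GeneralLinearGroup.map φ.toRingHom) (genericPoint k _) w)
  have hdetK : (FreeGroup.lift g w).val.det = 1 := by
    rw [← hg, ← RingHom.map_det, hdet, map_one]
  have hvK : (krylov (FreeGroup.lift g w).val (Pi.single 0 1)).det ≠ 0 := by
    rw [← hg, ← comp_single_one φ.toRingHom, ← map_krylov, ← RingHom.map_det]
    exact (map_ne_zero_iff φ hφ).mpr hv
  obtain ⟨U, hU⟩ := exists_conjCompanion_eq_conj Q hdetK hvK
  have hcoeffs : φ ∘ charpolyCoeffs (genericWord k (Fin (m + 2)) w).val =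
      charpolyCoeffs (FreeGroup.lift g w).val := by
    rw [← hg, map_charpolyCoeffs]
    rfl
  rw [← map_eq_zero_iff φ hφ, map_evalAt]
  refine (congrArg (evalAt · P) (map_conjCompanion φ Q _)).trans ?_
  rw [hcoeffs, hU]
  exact evalAt_conj_lift_eq_zero hP g U

lemma evalAt_conjCompanion_eq_zero [IsDomain k]
    (hind : AlgebraicIndependent k (charpolyCoeffs (genericWord k (Fin (m + 2)) w).val))
    (hdet : (genericWord k (Fin (m + 2)) w).val.det = 1)
    (hv : (krylov (genericWord k (Fin (m + 2)) w).val (Pi.single 0 1)).det ≠ 0)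
    (hP : evalAt (genericWord k (Fin (m + 2)) w).val P = 0)
    (Q : GL (Fin (m + 2)) k) (c : Fin (m + 1) → k) : evalAt (conjCompanion Q c) P = 0 := by
  have hzero : evalAt (conjCompanion Q (MvPolynomial.X (R := k))) P = 0 := by
    refine hind.eq_zero_of_aeval_eq_zero _ ?_
    rw [aeval_evalAt_conjCompanion]
    exact evalAt_conjCompanion_charpolyCoeffs_eq_zero hdet hv hP Q
  rw [← aeval_evalAt_conjCompanion, hzero, map_zero]

lemma exists_specialize_normalize_eq {A : Matrix (Fin (m + 2)) (Fin (m + 2)) k} (hA : A.det = 1) :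
    ∃ f : GenericRing k Unit (Fin (m + 2)) →ₐ[k] k,
      f.toRingHom.mapMatrix (normalize (genericPoint k (Fin (m + 2)) ())) = A := by
  let G : GL (Fin (m + 2)) k := GeneralLinearGroup.mk'' A (hA ▸ isUnit_one)
  refine ⟨specialize fun _ => G, ?_⟩
  rw [map_normalize, map_specialize_genericPoint]
  exact normalize_of_det_eq_one hA

end Companion

section Step

variable {k σ : Type*} [Field k] {m : ℕ} {w : FreeGroup σ}
  {P : MvPolynomial (Fin (m + 2) × Fin (m + 2)) k}

lemma evalAt_eq_zero_of_det_krylov_ne_zero [Infinite k]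
    (hP : ∀ A : Matrix (Fin (m + 2)) (Fin (m + 2)) k,
      A.det = 1 → (krylov A (Pi.single 0 1)).det ≠ 0 → evalAt A P = 0)
    {A : Matrix (Fin (m + 2)) (Fin (m + 2)) k} (hA : A.det = 1) : evalAt A P = 0 := by
  let N := normalize (genericPoint k (Fin (m + 2)) ())
  have hkrylov (f : GenericRing k Unit (Fin (m + 2)) →ₐ[k] k) :
      f (krylov N (Pi.single 0 1)).det =
        (krylov (f.toRingHom.mapMatrix N) (Pi.single 0 1)).det := by
    rw [← comp_single_one f.toRingHom, ← map_krylov, ← RingHom.map_det]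
    rfl
  have hcyclic : (krylov N (Pi.single 0 1)).det ≠ 0 := by
    obtain ⟨f, hf⟩ := exists_specialize_normalize_eq
      (det_companion_unimodularPoly (0 : Fin (m + 1) → k))
    intro h
    have hone := hkrylov f
    rw [h, hf, krylov_companion, det_one, map_zero] at hone
    exact zero_ne_one hone
  have hmul : evalAt N P * (krylov N (Pi.single 0 1)).det = 0 := by
    refine eq_zero_of_forall_specialize_eq_zero fun g => ?_
    rw [map_mul, map_evalAt, hkrylov, mul_eq_zero, or_iff_not_imp_right]
    refine hP _ ?_
    change ((specialize (k := k) g).toRingHom.mapMatrix N).det = 1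
    rw [map_normalize, det_normalize]
  obtain ⟨f, rfl⟩ := exists_specialize_normalize_eq hA
  exact (map_evalAt f N P).symm.trans
    (by rw [(mul_eq_zero.mp hmul).resolve_right hcyclic, map_zero])

lemma exists_eq_conjCompanion {A : Matrix (Fin (m + 2)) (Fin (m + 2)) k} (hA : A.det = 1)
    {v : Fin (m + 2) → k} (hv : (krylov A v).det ≠ 0) :
    ∃ Q : GL (Fin (m + 2)) k, A = conjCompanion Q (charpolyCoeffs A) := by
  obtain ⟨Q, hQ⟩ := exists_eq_conj_companion hv
  refine ⟨Q, ?_⟩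
  rw [charpoly_eq_unimodularPoly hA] at hQ
  exact hQ

theorem IsDenseInSL.succ [Infinite k] (h : IsDenseInSL k w (m + 1))
    (hdet : (genericWord k (Fin (m + 2)) w).val.det = 1)
    (hne : genericWord k (Fin (m + 2)) w ≠ 1) : IsDenseInSL k w (m + 2) := by
  have hind : AlgebraicIndependent k (charpolyCoeffs (genericWord k (Fin (m + 2)) w).val) :=
    h.algebraicIndependent hdet (det_genericWord_sub_one_ne_zero (n := m + 2) hne)
  have hcyclic : (krylov (genericWord k (Fin (m + 2)) w).val (Pi.single 0 1)).det ≠ 0 := by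
    cases m with
    | zero => exact det_krylov_genericWord_two_ne_zero hdet hne
    | succ m => exact h.det_krylov_genericWord_ne_zero
  intro P hP A hA
  refine evalAt_eq_zero_of_det_krylov_ne_zero (fun B hB hv => ?_) hA
  obtain ⟨Q, hQ⟩ := exists_eq_conjCompanion hB hv
  rw [hQ]
  exact evalAt_conjCompanion_eq_zero hind hdet hcyclic hP Q _

end Step

section Induction

variable {k σ : Type*} [CommRing k] {w : FreeGroup σ}

lemma isDenseInSL_of_subsingleton (n : ℕ) [Subsingleton (Fin n)] (w : FreeGroup σ) :
    IsDenseInSL k w n := by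
  intro P hP A hA
  have hone : A = 1 := congrArg Subtype.val
    (Subsingleton.elim (α := SpecialLinearGroup (Fin n) k) ⟨A, hA⟩ 1)
  have h := congrArg (specialize (1 : σ → GL (Fin n) k)) hP
  rw [map_evalAt, map_zero] at h
  rw [hone, ← map_specialize_one_genericWord w]
  exact h

variable {ι S : Type*} [Fintype ι] [DecidableEq ι] [CommRing S]

lemma det_commutator (a b : GL ι S) : ⁅a, b⁆.val.det = 1 := by
  rw [← GeneralLinearGroup.val_det_apply, map_commutatorElement, commutatorElement_def,
    mul_inv_cancel_comm, mul_inv_cancel, Units.val_one]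

lemma exists_lift_commutatorWord_eq_toGL (g : σ × Bool → GL ι S) (w : FreeGroup σ) :
    ∃ h : σ → SpecialLinearGroup ι S,
      FreeGroup.lift g (commutatorWord w) = SpecialLinearGroup.toGL (FreeGroup.lift h w) := by
  let h (s : σ) : SpecialLinearGroup ι S := ⟨_, det_commutator (g (s, false)) (g (s, true))⟩
  have hh : (fun s => SpecialLinearGroup.toGL (h s)) = fun s => ⁅g (s, false), g (s, true)⁆ :=
    funext fun s => Units.ext rfl
  exact ⟨h, by rw [lift_commutatorWord, map_lift, hh]⟩

lemma det_genericWord_commutatorWord (w : FreeGroup σ) :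
    (genericWord k ι (commutatorWord w)).val.det = 1 := by
  obtain ⟨h, hh⟩ := exists_lift_commutatorWord_eq_toGL (genericPoint k ι) w
  rw [genericWord, hh]
  exact (FreeGroup.lift h w).det_coe

theorem isDenseInSL_commutatorWord {k : Type*} [Field k] [Infinite k] (hw : w ≠ 1) (n : ℕ) :
    IsDenseInSL k (commutatorWord w) n := by
  induction n with
  | zero => exact isDenseInSL_of_subsingleton 0 _
  | succ n ih =>
    cases n with
    | zero => exact isDenseInSL_of_subsingleton 1 _
    | succ m =>
      exact ih.succ (det_genericWord_commutatorWord w) (genericWord_commutatorWord_ne_one hw)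

lemma evalAt_genericWord_commutatorWord_eq_zero {k : Type*} [Field k] [Infinite k]
    {P : MvPolynomial (ι × ι) k}
    (hP : ∀ g : σ → SpecialLinearGroup ι k, evalAt (FreeGroup.lift g w).val P = 0) :
    evalAt (genericWord k ι (commutatorWord w)).val P = 0 := by
  refine eq_zero_of_forall_specialize_eq_zero fun g => ?_
  obtain ⟨h, hh⟩ := exists_lift_commutatorWord_eq_toGL g w
  rw [specialize_evalAt_genericWord, hh]
  exact hP h

end Induction

end BorelDominance

open BorelDominance in
theorem borel_dominance_SL_general {k σ : Type*} [Field k] [Infinite k] (n : ℕ)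
    (w : FreeGroup σ) (hw : w ≠ 1) (p : MvPolynomial (Fin n × Fin n) k)
    (hp : ∀ g : σ → Matrix.SpecialLinearGroup (Fin n) k,
      MvPolynomial.eval
        (fun ij : Fin n × Fin n =>
          ((FreeGroup.lift g w : Matrix.SpecialLinearGroup (Fin n) k) :
            Matrix (Fin n) (Fin n) k) ij.1 ij.2) p = 0)
    (A : Matrix.SpecialLinearGroup (Fin n) k) :
    MvPolynomial.eval
      (fun ij : Fin n × Fin n => (A : Matrix (Fin n) (Fin n) k) ij.1 ij.2) p = 0 := by
  have hgeneric : evalAt (genericWord k (Fin n) (commutatorWord w)).val p = 0 :=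
    evalAt_genericWord_commutatorWord_eq_zero fun g => by
      rw [evalAt, MvPolynomial.aeval_eq_eval]
      exact hp g
  have hA := isDenseInSL_commutatorWord hw n p hgeneric A A.det_coe
  rwa [evalAt, MvPolynomial.aeval_eq_eval] at hA

/-- Borel's theorem for `SL_n` in characteristic zero: for an
algebraically closed field `k` of characteristic zero, `n ≥ 1`, `d ≥ 2` and a
nontrivial word `w ∈ F_d`, the image of the word map `w : SL_n(k)^d → SL_n(k)` is
Zariski dense: any polynomial in the `n²` matrix entries vanishing on all word values
vanishes on all of `SL_n(k)`. -/
theorem borel_dominance_SL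
    {k : Type*} [Field k] [IsAlgClosed k] [CharZero k]
    (n : ℕ) (hn : 1 ≤ n) (d : ℕ) (hd : 2 ≤ d)
    (w : FreeGroup (Fin d)) (hw : w ≠ 1)
    (p : MvPolynomial (Fin n × Fin n) k)
    (hp : ∀ g : Fin d → Matrix.SpecialLinearGroup (Fin n) k,
      MvPolynomial.eval
        (fun ij : Fin n × Fin n =>
          ((FreeGroup.lift g w : Matrix.SpecialLinearGroup (Fin n) k) :
            Matrix (Fin n) (Fin n) k) ij.1 ij.2) p = 0) :
    ∀ A : Matrix.SpecialLinearGroup (Fin n) k,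
      MvPolynomial.eval
        (fun ij : Fin n × Fin n => (A : Matrix (Fin n) (Fin n) k) ij.1 ij.2) p = 0 :=
  borel_dominance_SL_general n w hw p hp
end

section
/- Let K be an algebraically closed field of characteristic zero, and let P be a multilinear noncommutative polynomial in n variables over K, given by coefficients c : Sym(n) → K via P(A_1,…,A_n) = Σ_{σ ∈ Sym(n)} c_σ · A_{σ(1)} A_{σ(2)} ⋯ A_{σ(n)}, evaluated on 2×2 matrices over K. Suppose there exists a tuple (A_1,…,A_n) of 2×2 matrices over K such that the value P(A_1,…,A_n) is not a scalar matrix and has nonzero trace. Then P has a unipotent value: there exists a tuple (B_1,…,B_n) of 2×2 matrices over K such that (P(B_1,…,B_n) − I)² = 0 and P(B_1,…,B_n) ≠ I, where I is the 2×2 identity matrix. -/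
/-- The evaluation of the multilinear noncommutative polynomial with coefficients
`c : Sym(n) → K` at a tuple of `2×2` matrices `A`:
`P(A_1,…,A_n) = Σ_{σ} c_σ • A_{σ(1)} ⋯ A_{σ(n)}`. -/
noncomputable def multilinearEval {K : Type*} [Field K] {n : ℕ}
    (c : Equiv.Perm (Fin n) → K) (A : Fin n → Matrix (Fin 2) (Fin 2) K) :
    Matrix (Fin 2) (Fin 2) K :=
  ∑ σ : Equiv.Perm (Fin n), c σ • ((List.finRange n).map (fun i => A (σ i))).prod

/-!
Let `f` be multilinear and equivariant under conjugation. A parabolic value with nonzero trace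
becomes unipotent when one argument is rescaled, so suppose there is none. Fixing all arguments but
one, the discriminant becomes a quadratic form `q` on the remaining slot, and the trace a linear
form `τ`. If `q` had rank at least two and `τ ≠ 0`, then `q` would have an isotropic vector outside
the radical, which can be moved so that also `τ ≠ 0` there: a forbidden value. So `q` has rank at
most one, first where `τ ≠ 0`, then everywhere by Zariski density. In particular the zeros of `q`
form a subspace, so to show that `f` has zero discriminant everywhere it suffices to consider
arguments from spanning sets. Take the matrices `1, Z, X, ZX`. Up to sign they commute with `Z` and
`X`, hence so does the value of `f`. If both signs are `1`, the value is scalar. If it anticommutes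
with `Z`, the arguments can be split further into matrix units, which are eigenvectors for
conjugation by diagonal matrices, and then the value is a multiple of a nilpotent matrix unit.
Finally `X` is conjugate to `Z`. Zero discriminant everywhere makes the given value parabolic.
-/

open Function Matrix

section Spans

variable {ι R : Type*} {V : ι → Type*} [Finite ι] [DecidableEq ι] [Semiring R]
  [∀ i, AddCommMonoid (V i)] [∀ i, Module R (V i)]

theorem span_pi_induction {S : ∀ i, Set (V i)} {Q : (∀ i, V i) → Prop}
    (mem : ∀ x, (∀ i, x i ∈ S i) → Q x) (zero : ∀ x i, Q (update x i 0))
    (add : ∀ x i u v, Q (update x i u) → Q (update x i v) → Q (update x i (u + v)))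
    (smul : ∀ x i (a : R) u, Q (update x i u) → Q (update x i (a • u)))
    {x : ∀ i, V i} (hx : ∀ i, x i ∈ Submodule.span R (S i)) : Q x := by
  cases nonempty_fintype ι
  suffices main : ∀ s : Finset ι, ∀ x : ∀ i, V i, (∀ i ∈ s, x i ∈ Submodule.span R (S i)) →
      (∀ i ∉ s, x i ∈ S i) → Q x from
    main Finset.univ x (fun i _ => hx i) fun i hi => absurd (Finset.mem_univ i) hi
  intro s
  induction s using Finset.induction_on with
  | empty => exact fun x _ hS => mem x fun i => hS i (Finset.notMem_empty i)
  | insert a s ha ih =>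
    intro x hspan hS
    have hxa := hspan a (Finset.mem_insert_self a s)
    rw [← update_eq_self a x]
    generalize x a = u at hxa ⊢
    induction hxa using Submodule.span_induction with
    | mem u hu =>
      refine ih _ (fun i hi => ?_) fun i hi => ?_
      · rw [update_of_ne (ne_of_mem_of_not_mem hi ha)]
        exact hspan i (Finset.mem_insert_of_mem hi)
      · obtain rfl | hia := eq_or_ne i a
        · rwa [update_self]
        · rw [update_of_ne hia]
          exact hS i (by simp [hia, hi])
    | zero => exact zero x a
    | add u v _ _ hu hv => exact add x a u v hu hv
    | smul c u _ hu => exact smul x a c u hu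

end Spans

section BilinearForms

variable {K V : Type*} [Field K] [AddCommGroup V] [Module K V] {B : LinearMap.BilinForm K V}

theorem exists_isotropic_apply_ne_zero (hK : ∀ a : K, IsSquare a) (hB : B.IsSymm) {u v : V}
    (huv : B u v ^ 2 ≠ B u u * B v v) : ∃ z y, B z z = 0 ∧ B z y ≠ 0 := by
  have huv_symm : B v u = B u v := hB.eq v u
  by_cases hv : B v v = 0
  · exact ⟨v, u, hv, fun h => huv (by rw [← huv_symm, h, hv]; ring)⟩
  · obtain ⟨δ, hδ⟩ := hK (B u v ^ 2 - B u u * B v v)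
    have hδ_ne : δ ≠ 0 := by
      rintro rfl
      exact huv (by linear_combination hδ)
    -- a root of the quadratic polynomial `B (u + t • v) (u + t • v)` in `t`, denominators cleared
    refine ⟨B v v • u + (δ - B u v) • v, v, ?_, ?_⟩
    · simp only [map_add, map_smul, LinearMap.add_apply, LinearMap.smul_apply, smul_eq_mul,
        huv_symm]
      linear_combination -B v v * hδ
    · have : B (B v v • u + (δ - B u v) • v) v = δ * B v v := by
        simp only [map_add, map_smul, LinearMap.add_apply, LinearMap.smul_apply, smul_eq_mul]
        ring
      rw [this]
      exact mul_ne_zero hδ_ne hv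

theorem exists_apply_ne_zero_and_apply_ne_zero {R M N : Type*} [Semiring R] [AddCommMonoid M]
    [AddCommMonoid N] [Module R M] [Module R N] {φ ψ : M →ₗ[R] N} {x y : M} (hx : φ x ≠ 0)
    (hy : ψ y ≠ 0) : ∃ z, φ z ≠ 0 ∧ ψ z ≠ 0 := by
  by_cases hψx : ψ x = 0
  · by_cases hφy : φ y = 0
    · exact ⟨x + y, by simpa [hφy] using hx, by simpa [hψx] using hy⟩
    · exact ⟨y, hφy, hy⟩
  · exact ⟨x, hx, hψx⟩

theorem exists_isotropic_apply_ne_zero_of_dual_ne_zero [NeZero (2 : K)]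
    (hK : ∀ a : K, IsSquare a) (hB : B.IsSymm) {τ : Module.Dual K V} {s u v : V} (hs : τ s ≠ 0)
    (huv : B u v ^ 2 ≠ B u u * B v v) : ∃ z y, B z z = 0 ∧ τ z ≠ 0 ∧ B z y ≠ 0 := by
  obtain ⟨z, y, hz, hzy⟩ := exists_isotropic_apply_ne_zero hK hB huv
  by_cases hτz : τ z = 0
  · obtain ⟨c, hτc, hzc⟩ := exists_apply_ne_zero_and_apply_ne_zero hs hzy
    have hcz : B c z = B z c := hB.eq c z
    have two_ne : (2 : K) ≠ 0 := two_ne_zero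
    refine ⟨c - (B c c / (2 * B z c)) • z, z, ?_, ?_, ?_⟩
    · simp only [map_sub, map_smul, LinearMap.sub_apply, LinearMap.smul_apply, smul_eq_mul,
        hcz, hz]
      field_simp
      ring
    · simpa [hτz] using hτc
    · simpa [hz, hcz] using hzc
  · exact ⟨z, y, hz, hτz, hzy⟩

end BilinearForms

section Discriminant

/-- The symmetric bilinear form on `2 × 2` matrices whose quadratic form is `Matrix.discr`. -/
def discrBilin (R : Type*) [CommRing R] : LinearMap.BilinForm R (Matrix (Fin 2) (Fin 2) R) :=
  LinearMap.mk₂ R (fun M N => 2 * (M * N).trace - M.trace * N.trace)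
    (fun M M' N => by simp only [add_mul, trace_add]; ring)
    (fun a M N => by simp only [smul_mul_assoc, trace_smul, smul_eq_mul]; ring)
    (fun M N N' => by simp only [mul_add, trace_add]; ring)
    (fun a M N => by simp only [mul_smul_comm, trace_smul, smul_eq_mul]; ring)

variable {R : Type*} [CommRing R]

theorem discrBilin_apply (M N : Matrix (Fin 2) (Fin 2) R) :
    discrBilin R M N = 2 * (M * N).trace - M.trace * N.trace :=
  rfl

theorem discrBilin_self (M : Matrix (Fin 2) (Fin 2) R) : discrBilin R M M = M.discr := by
  simp only [discrBilin_apply, discr_fin_two, det_fin_two, trace_fin_two, mul_apply,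
    Fin.sum_univ_two]
  ring

theorem isSymm_discrBilin : (discrBilin R).IsSymm :=
  ⟨fun M N => by simp only [discrBilin_apply, trace_mul_comm M N, mul_comm M.trace]⟩

theorem discr_add (M N : Matrix (Fin 2) (Fin 2) R) :
    (M + N).discr = M.discr + 2 * discrBilin R M N + N.discr := by
  simp only [← discrBilin_self, map_add, LinearMap.add_apply, isSymm_discrBilin.eq N M]
  ring

theorem discrBilin_scalar (a : R) (N : Matrix (Fin 2) (Fin 2) R) :
    discrBilin R (scalar (Fin 2) a) N = 0 := by
  rw [discrBilin_apply, scalar_apply, ← smul_one_eq_diagonal, smul_one_mul, trace_smul, trace_smul,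
    trace_one, Fintype.card_fin, smul_eq_mul, smul_eq_mul, Nat.cast_two]
  ring

theorem discrBilin_map {S : Type*} [CommRing S] (φ : R →+* S) (M N : Matrix (Fin 2) (Fin 2) R) :
    discrBilin S (M.map φ) (N.map φ) = φ (discrBilin R M N) := by
  simp [discrBilin_apply, trace_fin_two, mul_apply, map_ofNat]

theorem discr_eq_of_semiconjBy {n : Type*} [Fintype n] [DecidableEq n] {g M N : Matrix n n R}
    (hg : IsUnit g) (h : SemiconjBy g M N) : N.discr = M.discr := by
  obtain ⟨u, rfl⟩ := hg
  rw [← discr_conj u M, ← coe_units_inv, h.eq, Units.mul_inv_cancel_right]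

theorem exists_smul_sub_one_sq_eq_zero_of_isParabolic {K : Type*} [Field K] [NeZero (2 : K)]
    {M : Matrix (Fin 2) (Fin 2) K} (hM : M.IsParabolic) (htr : M.trace ≠ 0) :
    ∃ a : K, (a • M - 1) ^ 2 = 0 ∧ a • M ≠ 1 := by
  have two_ne : (2 : K) ≠ 0 := two_ne_zero
  refine ⟨2 / M.trace, ?_, fun h => hM.1 ⟨M.trace / 2, ?_⟩⟩
  · have : (2 / M.trace) • M - 1 = (2 / M.trace) • (M - scalar _ M.parabolicEigenvalue) := by
      rw [parabolicEigenvalue, smul_sub, scalar_apply, ← smul_one_eq_diagonal, smul_smul,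
        div_mul_div_cancel₀ htr, div_self two_ne, one_smul]
    rw [this, smul_pow, hM.sub_eigenvalue_sq_eq_zero, smul_zero]
  · rw [scalar_apply, ← smul_one_eq_diagonal, ← h, smul_smul, div_mul_div_cancel₀ two_ne,
      div_self htr, one_smul]

end Discriminant

section Lines

open Polynomial

variable {ι K m n : Type*} {V : ι → Type*} [Finite ι] [CommSemiring K] [∀ i, AddCommMonoid (V i)]
  [∀ i, Module K (V i)]

theorem exists_matrix_polynomial_map_eval_eq (f : MultilinearMap K V (Matrix m n K))
    (x y : ∀ i, V i) :
    ∃ p : Matrix m n K[X], ∀ t, p.map (evalRingHom t) = f (x + t • y) := by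
  classical
  cases nonempty_fintype ι
  refine ⟨∑ s : Finset ι, (X ^ s.card : K[X]) • (f (s.piecewise y x)).map C, fun t => ?_⟩
  have term (s : Finset ι) : f (s.piecewise (t • y) x) = t ^ s.card • f (s.piecewise y x) := by
    have : s.piecewise (t • y) x =
        s.piecewise (fun i => t • s.piecewise y x i) (s.piecewise y x) := by
      ext1 i
      by_cases hi : i ∈ s <;> simp [hi]
    rw [this, f.map_piecewise_smul (fun _ => t), Finset.prod_const]
  ext i j
  rw [add_comm x, f.map_add_univ]
  simp [term, Matrix.sum_apply, eval_finsetSum, mul_comm (t ^ _)]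

theorem exists_matrix_polynomial_map_eval_eq_update [DecidableEq ι]
    (f : MultilinearMap K V (Matrix m n K)) (x y : ∀ i, V i) (i : ι) (v : V i) :
    ∃ p : Matrix m n K[X], ∀ t, p.map (evalRingHom t) = f (update (x + t • y) i v) := by
  have update_line (t : K) : update (x + t • y) i v = update x i v + t • update y i 0 := by
    rw [← update_smul, ← update_add, smul_zero, add_zero]
  simpa only [update_line] using
    exists_matrix_polynomial_map_eval_eq f (update x i v) (update y i 0)

end Lines

section Slots

open Polynomial

variable {ι K : Type*} [DecidableEq ι] [Field K]
  {f : MultilinearMap K (fun _ : ι => Matrix (Fin 2) (Fin 2) K) (Matrix (Fin 2) (Fin 2) K)}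

variable (f) in
/-- In each slot, for fixed values of the other arguments, the quadratic form `Matrix.discr ∘ f` has
rank at most one, expressed by the vanishing of all `2 × 2` Gram determinants. -/
def HasDegenerateSlots : Prop :=
  ∀ A i X Y, discrBilin K (f (update A i X)) (f (update A i Y)) ^ 2 =
    (f (update A i X)).discr * (f (update A i Y)).discr

theorem discrBilin_slot_sq_eq [NeZero (2 : K)] (hK : ∀ a : K, IsSquare a)
    (hf : ∀ A, (f A).IsParabolic → (f A).trace = 0) {A : ι → Matrix (Fin 2) (Fin 2) K} {i : ι}
    {S : Matrix (Fin 2) (Fin 2) K} (hS : (f (update A i S)).trace ≠ 0)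
    (X Y : Matrix (Fin 2) (Fin 2) K) :
    discrBilin K (f (update A i X)) (f (update A i Y)) ^ 2 =
      (f (update A i X)).discr * (f (update A i Y)).discr := by
  by_contra hXY
  let slot := f.toLinearMap A i
  have gram_ne : discrBilin K (slot X) (slot Y) ^ 2 ≠
      discrBilin K (slot X) (slot X) * discrBilin K (slot Y) (slot Y) := by
    rwa [discrBilin_self, discrBilin_self]
  obtain ⟨Z, N, hZ, hZtr, hZN⟩ := exists_isotropic_apply_ne_zero_of_dual_ne_zero hK
    (B := (discrBilin K).compl₁₂ slot slot) (τ := traceLinearMap (Fin 2) K K ∘ₗ slot)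
    ⟨fun M N => isSymm_discrBilin.eq (slot M) (slot N)⟩ (s := S) hS (u := X) (v := Y)
    gram_ne
  have hdiscr : (slot Z).discr = 0 := (discrBilin_self (slot Z)).symm.trans hZ
  refine hZtr (hf (update A i Z) ⟨?_, hdiscr⟩)
  rintro ⟨a, ha⟩
  have hrad : discrBilin K (f (update A i Z)) (slot N) = 0 := by rw [← ha, discrBilin_scalar]
  exact hZN hrad

theorem infinite_of_forall_isSquare [NeZero (2 : K)] (hK : ∀ a : K, IsSquare a) : Infinite K := by
  by_contra hfin
  rw [not_infinite_iff_finite] at hfin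
  have hchar : ringChar K ≠ 2 := fun h => two_ne_zero (α := K) (by
    exact_mod_cast h ▸ ringChar.Nat.cast_ringChar (R := K))
  obtain ⟨a, ha⟩ := FiniteField.exists_nonsquare hchar
  exact ha (hK a)

theorem hasDegenerateSlots_of_isParabolic_trace_eq_zero [Finite ι] [NeZero (2 : K)]
    (hK : ∀ a : K, IsSquare a) (hf : ∀ A, (f A).IsParabolic → (f A).trace = 0)
    {C : ι → Matrix (Fin 2) (Fin 2) K} (hC : (f C).trace ≠ 0) : HasDegenerateSlots f := by
  intro A i X Y
  have : Infinite K := infinite_of_forall_isSquare hK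
  obtain ⟨p, hp⟩ := exists_matrix_polynomial_map_eval_eq_update f A (C - A) i X
  obtain ⟨q, hq⟩ := exists_matrix_polynomial_map_eval_eq_update f A (C - A) i Y
  obtain ⟨r, hr⟩ := exists_matrix_polynomial_map_eval_eq_update f A (C - A) i (C i)
  let D : K[X] := discrBilin _ p q ^ 2 - discrBilin _ p p * discrBilin _ q q
  have eval_D (t : K) : D.eval t =
      discrBilin K (f (update (A + t • (C - A)) i X)) (f (update (A + t • (C - A)) i Y)) ^ 2 -
        (f (update (A + t • (C - A)) i X)).discr * (f (update (A + t • (C - A)) i Y)).discr := by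
    simp only [← coe_evalRingHom, D, map_sub, map_mul, map_pow, ← discrBilin_map, hp, hq,
      ← discrBilin_self]
  have eval_trace (t : K) : r.trace.eval t = (f (update (A + t • (C - A)) i (C i))).trace := by
    rw [← hr, ← coe_evalRingHom]
    exact AddMonoidHom.map_trace (evalRingHom t) r
  have trace_ne : r.trace ≠ 0 := by
    intro h
    have := eval_trace 1
    rw [h, eval_zero, one_smul, add_sub_cancel, update_eq_self] at this
    exact hC this.symm
  have D_mul_trace : D * r.trace = 0 := by
    refine Polynomial.funext fun t => ?_
    rw [eval_mul, eval_zero]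
    by_cases ht : r.trace.eval t = 0
    · rw [ht, mul_zero]
    · rw [eval_D, discrBilin_slot_sq_eq hK hf (eval_trace t ▸ ht), sub_self, zero_mul]
  have D_zero := eval_D 0
  rw [(mul_eq_zero.mp D_mul_trace).resolve_right trace_ne, eval_zero, zero_smul, add_zero]
    at D_zero
  exact sub_eq_zero.mp D_zero.symm

theorem HasDegenerateSlots.discr_eq_zero_of_span [Finite ι] (hf : HasDegenerateSlots f)
    {S : ι → Set (Matrix (Fin 2) (Fin 2) K)} (hS : ∀ A, (∀ i, A i ∈ S i) → (f A).discr = 0)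
    {A : ι → Matrix (Fin 2) (Fin 2) K} (hA : ∀ i, A i ∈ Submodule.span K (S i)) :
    (f A).discr = 0 := by
  refine span_pi_induction hS (fun A i => ?_) (fun A i X Y hX hY => ?_) (fun A i a X hX => ?_) hA
  · rw [f.map_update_zero, ← discrBilin_self, map_zero]
  · have hXY : discrBilin K (f (update A i X)) (f (update A i Y)) = 0 := by
      rw [← sq_eq_zero_iff, hf, hX, zero_mul]
    rw [f.map_update_add, discr_add, hX, hY, hXY]
    ring
  · rw [← discrBilin_self] at hX ⊢
    simp [hX]

end Slots

section Equivariance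

/-- Equivariance under simultaneous conjugation, `f (g x g⁻¹) = g (f x) g⁻¹`, with `SemiconjBy` in
place of inverses. -/
def IsConjEquivariant {ι M : Type*} [Monoid M] (f : (ι → M) → M) : Prop :=
  ∀ ⦃g : M⦄, IsUnit g → ∀ ⦃x y : ι → M⦄, (∀ i, SemiconjBy g (x i) (y i)) →
    SemiconjBy g (f x) (f y)

theorem IsConjEquivariant.semiconjBy_smul {ι R A : Type*} [Fintype ι] [CommSemiring R]
    [Semiring A] [Module R A] {f : MultilinearMap R (fun _ : ι => A) A}
    (hf : IsConjEquivariant f) {g : A} (hg : IsUnit g) {x : ι → A} {l : ι → R}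
    (hx : ∀ i, SemiconjBy g (x i) (l i • x i)) : SemiconjBy g (f x) ((∏ i, l i) • f x) :=
  f.map_smul_univ l x ▸ hf hg hx

theorem semiconjBy_conj_of_semiconjBy {M : Type*} [Monoid M] {h x z a a' b b' : M} (hh : IsUnit h)
    (hx : SemiconjBy h x z) (ha : SemiconjBy h a b) (ha' : SemiconjBy h a' b')
    (hxa : SemiconjBy x a a') : SemiconjBy z b b' :=
  hh.mul_right_cancel <| calc
    z * b * h = h * (x * a) := (hx.mul_right ha).eq.symm
    _ = h * (a' * x) := by rw [hxa.eq]
    _ = b' * z * h := (ha'.mul_right hx).eq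

end Equivariance

section Pauli

variable {R : Type*} [CommRing R]

variable (R) in
/-- The Pauli matrix `Z`; conjugation by it splits `2 × 2` matrices into diagonal and antidiagonal
parts. -/
def pauliZ : Matrix (Fin 2) (Fin 2) R := diagonal ![1, -1]

variable (R) in
/-- The Pauli matrix `X`, which anticommutes with `pauliZ` and generates with it all `2 × 2`
matrices when `2` is invertible. -/
def pauliX : Matrix (Fin 2) (Fin 2) R := !![0, 1; 1, 0]

theorem isUnit_pauliZ : IsUnit (pauliZ R) := by
  simp [pauliZ, isUnit_iff_isUnit_det]

theorem isUnit_pauliX : IsUnit (pauliX R) := by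
  simp [pauliX, isUnit_iff_isUnit_det]

theorem pauliZ_mul_pauliX : pauliZ R * pauliX R = -(pauliX R * pauliZ R) := by
  ext i j
  rw [neg_apply, pauliZ, diagonal_mul, mul_diagonal]
  fin_cases i <;> fin_cases j <;> simp [pauliX]

theorem semiconjBy_diagonal_smul_iff {n : Type*} [Fintype n] [DecidableEq n] {d : n → R} {a : R}
    {M : Matrix n n R} :
    SemiconjBy (diagonal d) M (a • M) ↔ ∀ i j, d i * M i j = a * M i j * d j := by
  simp only [SemiconjBy, ← Matrix.ext_iff, diagonal_mul, mul_diagonal, Matrix.smul_apply,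
    smul_eq_mul]

theorem semiconjBy_diagonal_smul_single {n : Type*} [Fintype n] [DecidableEq n] {d : n → R}
    {a x : R} {i j : n} (h : d i * x = a * x * d j) :
    SemiconjBy (diagonal d) (single i j x) (a • single i j x) := by
  refine semiconjBy_diagonal_smul_iff.mpr fun i' j' => ?_
  rw [single_apply]
  split_ifs with hij
  · rwa [← hij.1, ← hij.2]
  · ring

/-- The elements `x` that commute with `g` up to sign: `g x = ε x g` with `ε² = 1`. For the two
Pauli matrices their intersection spans all `2 × 2` matrices. -/
def signCommutant (R : Type*) {A : Type*} [CommSemiring R] [Semiring A] [Algebra R A] (g : A) :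
    Submonoid A where
  carrier := {x | ∃ ε : R, ε ^ 2 = 1 ∧ SemiconjBy g x (ε • x)}
  one_mem' := ⟨1, one_pow 2, by simp⟩
  mul_mem' := by
    rintro x y ⟨ε, hε, hx⟩ ⟨δ, hδ, hy⟩
    refine ⟨ε * δ, by rw [mul_pow, hε, hδ, one_mul], ?_⟩
    rw [← smul_mul_smul_comm]
    exact hx.mul_right hy

theorem self_mem_signCommutant {A : Type*} [Semiring A] [Algebra R A] (g : A) :
    g ∈ signCommutant R g :=
  ⟨1, one_pow 2, by rw [one_smul]; exact Commute.refl g⟩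

theorem mem_signCommutant_of_mul_eq_neg_mul {A : Type*} [Ring A] [Algebra R A] {g x : A}
    (h : g * x = -(x * g)) : x ∈ signCommutant R g :=
  ⟨-1, neg_one_sq, by rw [SemiconjBy, h, neg_one_smul, neg_mul]⟩

variable {K : Type*} [Field K] [NeZero (2 : K)]

theorem mem_range_scalar_of_commute_pauli {M : Matrix (Fin 2) (Fin 2) K}
    (hZ : Commute (pauliZ K) M) (hX : Commute (pauliX K) M) : M ∈ Set.range (scalar (Fin 2)) := by
  have two_ne : (2 : K) ≠ 0 := two_ne_zero
  have entry_Z (i j : Fin 2) : ![1, -1] i * M i j = M i j * ![1, -1] j := by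
    simpa only [pauliZ, diagonal_mul, mul_diagonal] using congr_fun₂ hZ.eq i j
  have h01 : M 0 1 = 0 := by
    have : 1 * M 0 1 = M 0 1 * -1 := entry_Z 0 1
    exact (mul_eq_zero.mp (by linear_combination this)).resolve_left two_ne
  have h10 : M 1 0 = 0 := by
    have : -1 * M 1 0 = M 1 0 * 1 := entry_Z 1 0
    exact (mul_eq_zero.mp (by linear_combination -this)).resolve_left two_ne
  have h11 : M 1 1 = M 0 0 := by simpa [pauliX, mul_apply] using congr_fun₂ hX.eq 0 1
  refine ⟨M 0 0, ?_⟩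
  ext i j
  fin_cases i <;> fin_cases j <;> simp [h01, h10, h11]

theorem span_signCommutant_pauli :
    Submodule.span K ((signCommutant K (pauliZ K) ⊓ signCommutant K (pauliX K) : Submonoid _) :
      Set (Matrix (Fin 2) (Fin 2) K)) = ⊤ := by
  have two_ne : (2 : K) ≠ 0 := two_ne_zero
  refine eq_top_iff.mpr fun M _ => ?_
  let G := signCommutant K (pauliZ K) ⊓ signCommutant K (pauliX K)
  have hZ : pauliZ K ∈ G := ⟨self_mem_signCommutant _,
    mem_signCommutant_of_mul_eq_neg_mul (by rw [pauliZ_mul_pauliX, neg_neg])⟩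
  have hX : pauliX K ∈ G :=
    ⟨mem_signCommutant_of_mul_eq_neg_mul pauliZ_mul_pauliX, self_mem_signCommutant _⟩
  have smul_mem (a : K) {P} (hP : P ∈ G) : a • P ∈ Submodule.span K (G : Set _) :=
    Submodule.smul_mem _ a (Submodule.subset_span hP)
  have expand : M = ((M 0 0 + M 1 1) / 2) • 1 + ((M 0 0 - M 1 1) / 2) • pauliZ K +
      ((M 0 1 + M 1 0) / 2) • pauliX K + ((M 0 1 - M 1 0) / 2) • (pauliZ K * pauliX K) := by
    have half_add (a b : K) : (a + b) / 2 + (a - b) / 2 = a := by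
      field_simp
      ring
    have half_sub (a b : K) : (a + b) / 2 - (a - b) / 2 = b := by
      field_simp
      ring
    ext i j
    fin_cases i <;> fin_cases j <;>
      simp [pauliZ, pauliX, diagonal_mul, half_add, half_sub, ← sub_eq_add_neg]
  rw [expand]
  exact add_mem (add_mem (add_mem (smul_mem _ (one_mem G)) (smul_mem _ hZ)) (smul_mem _ hX))
    (smul_mem _ (mul_mem hZ hX))

theorem IsConjEquivariant.apply_mem_range_scalar {ι : Type*} [IsEmpty ι]
    {f : (ι → Matrix (Fin 2) (Fin 2) K) → Matrix (Fin 2) (Fin 2) K} (hf : IsConjEquivariant f)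
    (A : ι → Matrix (Fin 2) (Fin 2) K) : f A ∈ Set.range (scalar (Fin 2)) :=
  mem_range_scalar_of_commute_pauli (hf isUnit_pauliZ isEmptyElim) (hf isUnit_pauliX isEmptyElim)

end Pauli

section Vanishing

variable {ι K : Type*} [DecidableEq ι] [Field K] [NeZero (2 : K)]
  {f : MultilinearMap K (fun _ : ι => Matrix (Fin 2) (Fin 2) K) (Matrix (Fin 2) (Fin 2) K)}
  {A : ι → Matrix (Fin 2) (Fin 2) K}

theorem discr_eq_zero_of_semiconjBy_pauliZ {t a : K} (ht : t * t = -1)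
    {M : Matrix (Fin 2) (Fin 2) K} (hZ : SemiconjBy (pauliZ K) M ((-1 : K) • M))
    (hT : SemiconjBy (diagonal ![t, 1]) M (a • M)) : M.discr = 0 := by
  have two_ne : (2 : K) ≠ 0 := two_ne_zero
  have entry_Z := semiconjBy_diagonal_smul_iff.mp hZ
  have entry_T := semiconjBy_diagonal_smul_iff.mp hT
  have h00 : 1 * M 0 0 = -1 * M 0 0 * 1 := entry_Z 0 0
  have h11 : -1 * M 1 1 = -1 * M 1 1 * -1 := entry_Z 1 1
  have h01 : t * M 0 1 = a * M 0 1 * 1 := entry_T 0 1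
  have h10 : 1 * M 1 0 = a * M 1 0 * t := entry_T 1 0
  -- if both off-diagonal entries were nonzero, `a` would equal `t` as well as `t⁻¹ = -t`
  have two_mul_offDiag : 2 * (M 0 1 * M 1 0) = 0 := by
    linear_combination M 0 1 * h10 - t * M 1 0 * h01 + M 0 1 * M 1 0 * ht
  have diag00 : M 0 0 = 0 :=
    (mul_eq_zero.mp (by linear_combination h00)).resolve_left two_ne
  have diag11 : M 1 1 = 0 :=
    (mul_eq_zero.mp (by linear_combination -h11)).resolve_left two_ne
  rw [discr_fin_two, det_fin_two, trace_fin_two, diag00, diag11]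
  linear_combination 2 * two_mul_offDiag

theorem HasDegenerateSlots.discr_eq_zero_of_pauliZ [Fintype ι] (hf : HasDegenerateSlots f)
    (hf_conj : IsConjEquivariant f) (hK : ∀ a : K, IsSquare a) {ε : ι → K} (hε : ∏ i, ε i = -1)
    (hA : ∀ i, SemiconjBy (pauliZ K) (A i) (ε i • A i)) : (f A).discr = 0 := by
  obtain ⟨t, ht⟩ := hK (-1)
  have ht_ne : t ≠ 0 := by
    rintro rfl
    simp at ht
  have isUnit_T : IsUnit (diagonal ![t, 1]) := by
    simpa [isUnit_iff_isUnit_det] using ht_ne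
  refine hf.discr_eq_zero_of_span (S := fun i => {E | SemiconjBy (pauliZ K) E (ε i • E) ∧
    ∃ w : K, SemiconjBy (diagonal ![t, 1]) E (w • E)}) (fun E hE => ?_) fun i => ?_
  · choose hZ w hT using hE
    exact discr_eq_zero_of_semiconjBy_pauliZ ht.symm
      (hε ▸ hf_conj.semiconjBy_smul isUnit_pauliZ hZ) (hf_conj.semiconjBy_smul isUnit_T hT)
  · rw [matrix_eq_sum_single (A i)]
    refine sum_mem fun j _ => sum_mem fun k _ => Submodule.subset_span
      ⟨semiconjBy_diagonal_smul_single (semiconjBy_diagonal_smul_iff.mp (hA i) j k),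
        ![t, 1] j / ![t, 1] k, semiconjBy_diagonal_smul_single ?_⟩
    have d_ne : ![t, 1] k ≠ 0 := by fin_cases k <;> simp [ht_ne]
    field_simp

theorem HasDegenerateSlots.discr_eq_zero_of_pauliX [Fintype ι] (hf : HasDegenerateSlots f)
    (hf_conj : IsConjEquivariant f) (hK : ∀ a : K, IsSquare a) {ε : ι → K} (hε : ∏ i, ε i = -1)
    (hA : ∀ i, SemiconjBy (pauliX K) (A i) (ε i • A i)) : (f A).discr = 0 := by
  have two_ne : (2 : K) ≠ 0 := two_ne_zero
  have det_H : (!![1, 1; 1, -1] : Matrix (Fin 2) (Fin 2) K).det = -2 := by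
    rw [det_fin_two_of]
    ring
  obtain ⟨H, hH⟩ : IsUnit (!![1, 1; 1, -1] : Matrix (Fin 2) (Fin 2) K) := by
    rw [isUnit_iff_isUnit_det, det_H]
    exact (neg_ne_zero.mpr two_ne).isUnit
  have hXZ : SemiconjBy (H : Matrix (Fin 2) (Fin 2) K) (pauliX K) (pauliZ K) := by
    rw [hH]
    ext i j
    fin_cases i <;> fin_cases j <;> simp [pauliX, pauliZ, diagonal_mul]
  have conj (i : ι) := H.mk_semiconjBy (A i)
  rw [← discr_eq_of_semiconjBy H.isUnit (hf_conj H.isUnit conj)]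
  exact hf.discr_eq_zero_of_pauliZ hf_conj hK hε fun i =>
    semiconjBy_conj_of_semiconjBy H.isUnit hXZ (conj i) ((conj i).smul_right (ε i)) (hA i)

theorem HasDegenerateSlots.discr_eq_zero [Finite ι] (hf : HasDegenerateSlots f)
    (hf_conj : IsConjEquivariant f) (hK : ∀ a : K, IsSquare a)
    (A : ι → Matrix (Fin 2) (Fin 2) K) : (f A).discr = 0 := by
  cases nonempty_fintype ι
  refine hf.discr_eq_zero_of_span (fun P hP => ?_) fun i =>
    span_signCommutant_pauli (K := K) ▸ Submodule.mem_top
  choose ε hε hZ using fun i => (hP i).1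
  choose δ hδ hX using fun i => (hP i).2
  have prod_eq {η : ι → K} (hη : ∀ i, η i ^ 2 = 1) : ∏ i, η i = 1 ∨ ∏ i, η i = -1 := by
    rw [← sq_eq_one_iff, ← Finset.prod_pow]
    exact Finset.prod_eq_one fun i _ => hη i
  obtain prodε | prodε := prod_eq hε
  · obtain prodδ | prodδ := prod_eq hδ
    · have fP_Z := hf_conj.semiconjBy_smul isUnit_pauliZ hZ
      have fP_X := hf_conj.semiconjBy_smul isUnit_pauliX hX
      rw [prodε, one_smul] at fP_Z
      rw [prodδ, one_smul] at fP_X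
      obtain ⟨a, ha⟩ := mem_range_scalar_of_commute_pauli fP_Z fP_X
      rw [← ha, ← discrBilin_self, discrBilin_scalar]
    · exact hf.discr_eq_zero_of_pauliX hf_conj hK prodδ hX
  · exact hf.discr_eq_zero_of_pauliZ hf_conj hK prodε hZ

end Vanishing

section UnipotentValues

variable {ι K : Type*} [Finite ι] [Field K] [NeZero (2 : K)]
  {f : MultilinearMap K (fun _ : ι => Matrix (Fin 2) (Fin 2) K) (Matrix (Fin 2) (Fin 2) K)}

theorem exists_isParabolic_trace_ne_zero (hK : ∀ a : K, IsSquare a) (hf : IsConjEquivariant f)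
    {C : ι → Matrix (Fin 2) (Fin 2) K} (hC : f C ∉ Set.range (scalar (Fin 2)))
    (htr : (f C).trace ≠ 0) : ∃ B, (f B).IsParabolic ∧ (f B).trace ≠ 0 := by
  classical
  by_contra! h
  have slots : HasDegenerateSlots f := hasDegenerateSlots_of_isParabolic_trace_eq_zero hK h htr
  exact htr (h C ⟨hC, slots.discr_eq_zero hf hK C⟩)

theorem multilinear_polynomial_has_unipotent_value_general (hK : ∀ a : K, IsSquare a)
    (hf : IsConjEquivariant f)
    (h : ∃ A, (∀ lam : K, f A ≠ lam • (1 : Matrix (Fin 2) (Fin 2) K)) ∧ (f A).trace ≠ 0) :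
    ∃ B, (f B - 1) ^ 2 = 0 ∧ f B ≠ 1 := by
  classical
  obtain ⟨C, hC, htr⟩ := h
  have not_scalar : f C ∉ Set.range (scalar (Fin 2)) := by
    rintro ⟨a, ha⟩
    exact hC a (by rw [← ha, scalar_apply, smul_one_eq_diagonal])
  obtain ⟨B, hB, hB_tr⟩ := exists_isParabolic_trace_ne_zero hK hf not_scalar htr
  obtain ⟨a, ha_sq, ha_ne⟩ := exists_smul_sub_one_sq_eq_zero_of_isParabolic hB hB_tr
  rcases isEmpty_or_nonempty ι with _ | ⟨⟨i⟩⟩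
  · exact absurd (hf.apply_mem_range_scalar C) not_scalar
  · refine ⟨update B i (a • B i), ?_⟩
    rw [f.map_update_smul, update_eq_self]
    exact ⟨ha_sq, ha_ne⟩

end UnipotentValues

section Polynomials

theorem semiconjBy_list_prod {M α : Type*} [Monoid M] {g : M} {x y : α → M}
    (h : ∀ a, SemiconjBy g (x a) (y a)) (l : List α) :
    SemiconjBy g (l.map x).prod (l.map y).prod := by
  induction l with
  | nil => exact SemiconjBy.one_right g
  | cons a l ih => simpa only [List.map_cons, List.prod_cons] using (h a).mul_right ih

variable {K : Type*} [Field K] {n : ℕ} (c : Equiv.Perm (Fin n) → K)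

/-- `multilinearEval c` as a bundled multilinear map, for results on `MultilinearMap`. -/
def multilinearEvalMap :
    MultilinearMap K (fun _ : Fin n => Matrix (Fin 2) (Fin 2) K) (Matrix (Fin 2) (Fin 2) K) :=
  ∑ σ, c σ • (MultilinearMap.mkPiAlgebraFin K n _).domDomCongr σ

theorem coe_multilinearEvalMap : ⇑(multilinearEvalMap c) = multilinearEval c := by
  ext1 A
  simp [multilinearEvalMap, multilinearEval, List.ofFn_eq_map]

theorem isConjEquivariant_multilinearEval : IsConjEquivariant (multilinearEval c) := by
  intro g _ A B hAB
  simp_rw [SemiconjBy, multilinearEval, Finset.mul_sum, Finset.sum_mul, mul_smul_comm,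
    smul_mul_assoc]
  exact Finset.sum_congr rfl fun σ _ =>
    congrArg (c σ • ·) (semiconjBy_list_prod (fun i => hAB (σ i)) _).eq

end Polynomials

/-- over an algebraically closed field `K` of characteristic zero, a
multilinear polynomial on `2×2` matrices having some noncentral value of nonzero trace
has a unipotent value (different from the identity). -/
theorem multilinear_polynomial_has_unipotent_value
    {K : Type*} [Field K] [IsAlgClosed K] [CharZero K] {n : ℕ}
    (c : Equiv.Perm (Fin n) → K)
    (h : ∃ A : Fin n → Matrix (Fin 2) (Fin 2) K,
      (∀ lam : K, multilinearEval c A ≠ lam • (1 : Matrix (Fin 2) (Fin 2) K)) ∧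
      (multilinearEval c A).trace ≠ 0) :
    ∃ B : Fin n → Matrix (Fin 2) (Fin 2) K,
      (multilinearEval c B - 1) ^ 2 = 0 ∧ multilinearEval c B ≠ 1 := by
  rw [← coe_multilinearEvalMap] at h ⊢
  refine multilinear_polynomial_has_unipotent_value_general IsAlgClosed.exists_eq_mul_self ?_ h
  rw [coe_multilinearEvalMap]
  exact isConjEquivariant_multilinearEval c
end
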